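/- Let p_1,…,p_m ∈ ℕ with each p_i ≥ 2 and Σ_{i=1}^m 1/p_i < m−1. For every nontrivial conjugacy class K of Γ_{p_1,…,p_m}: if K ⊄ L_{p_1,…,p_m} then 𝔼[Z_K(H_n)] = o(n) as n → ∞, while if K ⊆ L_{p_1,…,p_m} then 𝔼[Z_K(H_n)] ∼ n as n → ∞. (By the fixed-point characterisation of weak-* convergence of invariant random subgroups, this expresses that the uniform random index n subgroup H_n converges, as an invariant random subgroup of Γ_{p_1,…,p_m}, to the Dirac mass at L_{p_1,…,p_m}.) -/

import Mathlib

open Filter Topology Asymptotics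
open scoped TensorProduct

/-- the relations `x_i ^ p_i = x_j ^ p_j` defining `Γ_{p_1,…,p_m}` -/
def torusRels (m : ℕ) (p : Fin m → ℕ) : Set (FreeGroup (Fin m)) :=
  {w : FreeGroup (Fin m) | ∃ i j : Fin m, w = FreeGroup.of i ^ p i * (FreeGroup.of j ^ p j)⁻¹}

/-- the group `Γ_{p_1,…,p_m} = ⟨x_1,…,x_m ∣ x_1^{p_1} = ⋯ = x_m^{p_m}⟩` -/
abbrev TorusKnotGroup (m : ℕ) (p : Fin m → ℕ) : Type :=
  PresentedGroup (torusRels m p)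

/-- the relations `x_i ^ p_i = 1` defining `C_{p_1} * ⋯ * C_{p_m}` -/
def cyclicRels (m : ℕ) (p : Fin m → ℕ) : Set (FreeGroup (Fin m)) :=
  {w : FreeGroup (Fin m) | ∃ i : Fin m, w = FreeGroup.of i ^ p i}

/-- the free product `C_{p_1} * ⋯ * C_{p_m}` of cyclic groups of orders `p_1, …, p_m`,
presented as `⟨x_1,…,x_m ∣ x_1^{p_1} = ⋯ = x_m^{p_m} = 1⟩`. -/
abbrev CyclicFreeProduct (m : ℕ) (p : Fin m → ℕ) : Type :=
  PresentedGroup (cyclicRels m p)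

theorem cyclicFreeProduct_gen_pow (m : ℕ) (p : Fin m → ℕ) (i : Fin m) :
    (PresentedGroup.of (rels := cyclicRels m p) i) ^ p i = 1 := by
  have : PresentedGroup.mk (cyclicRels m p) (FreeGroup.of i ^ p i) = 1 := by
    apply (QuotientGroup.eq_one_iff _).mpr
    exact Subgroup.subset_normalClosure ⟨i, rfl⟩
  rw [map_pow] at this
  exact this

/-- the projection `Φ_{p_1,…,p_m} : Γ_{p_1,…,p_m} → C_{p_1} * ⋯ * C_{p_m}`,
sending each generator `x_j` to the fixed generator of `C_{p_j}`;
its kernel is `L_{p_1,…,p_m}`. -/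
noncomputable def PhiMap (m : ℕ) (p : Fin m → ℕ) :
    TorusKnotGroup m p →* CyclicFreeProduct m p :=
  PresentedGroup.toGroup (f := fun i => PresentedGroup.of i) (by
    rintro w ⟨i, j, rfl⟩
    simp only [map_mul, map_pow, map_inv, FreeGroup.lift_apply_of]
    rw [cyclicFreeProduct_gen_pow, cyclicFreeProduct_gen_pow]
    simp)

/-- `Z_g(H)`: the number of fixed points of `g` acting on the coset space `G ⧸ H`.
For any `g` in a conjugacy class `K`, this equals `Z_K(H)`. -/
noncomputable def fixedCosetCount {G : Type*} [Group G] (g : G) (H : Subgroup G) : ℕ :=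
  Nat.card {x : G ⧸ H // g • x = x}

/-- the expectation of `f` over a uniformly random index `n` subgroup of `G` -/
noncomputable def subgroupExp (G : Type*) [Group G] (n : ℕ) (f : Subgroup G → ℝ) : ℝ :=
  (∑' H : {H : Subgroup G // H.index = n}, f H.1) /
    (Nat.card {H : Subgroup G // H.index = n} : ℝ)

/-!
Index `n` subgroups of `Γ = TorusKnotGroup m p` with a labelling of their cosets are the transitive
actions of `Γ` on `n` points, that is, the tuples `σ` of permutations in `S_n` generating a
transitive group and such that all powers `σ i ^ p i` agree. Their common value `z` is the image of
a generator of the central subgroup `L`. We compare with the tuples for which `z = 1`, the actions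
of the free product of the cyclic groups `C_{p i}`.

* The number of `p`-th roots of `1` in `S_n` is `n! ^ (1 - 1 / p)` up to a subexponential factor,
  by the recursion on the length of the cycle through a point, and by moments of the number of
  fixed points of a random root.
* As the Euler characteristic `χ` of the free product is negative, almost all tuples with `z = 1`
  are transitive: the tuples preserving a set of `k` points have density about
  `n.choose k ^ (χ - 1)`, and there are `n.choose k` such sets.
* If `σ` is transitive, then `z`, commuting with every `σ i`, has all cycles of the same length
  `d`. If `d ≥ 2`, roots of `z` are roots of `1` on the `n / d` cycles up to an exponential
  factor, so such tuples are rarer than those with `z = 1` by a power of `n!`.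

Thus almost all transitive actions of `Γ` factor through the free product; there `L` acts
trivially, which settles `g ∈ L`. An element `g ∉ L` acts as a nonempty reduced word. If it fixes a
point, the path of the point along the word has a first stay or a first collision. Stays are rare
because most points lie on cycles of full length `p i`. Collisions are rare by a switching argument:
the new endpoint can be moved to nearly `n` other points, and the tuple is recovered from boundedly
many data.
-/

section RootCount

open Equiv

/-- The number of `p`-th roots of the identity among the permutations of `n` points,
i.e. the number of homomorphisms from `C_p` to the symmetric group `S_n`. -/
noncomputable def rootCount (p n : ℕ) : ℕ := Nat.card {τ : Perm (Fin n) // τ ^ p = 1}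

lemma card_perm_pow_eq_one (p : ℕ) (α : Type*) [Finite α] :
    Nat.card {τ : Perm α // τ ^ p = 1} = rootCount p (Nat.card α) :=
  Nat.card_congr <| subtypeEquiv (Finite.equivFin α).permCongrHom.toEquiv fun τ ↦
    (map_eq_one_iff _ (Finite.equivFin α).permCongrHom.injective).symm.trans
      (by rw [map_pow]; rfl)

lemma rootCount_pos (p n : ℕ) : 0 < rootCount p n :=
  have : Nonempty {τ : Perm (Fin n) // τ ^ p = 1} := ⟨⟨1, one_pow p⟩⟩
  Nat.card_pos

@[simp]
lemma rootCount_zero (p : ℕ) : rootCount p 0 = 1 := by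
  have : Nonempty {τ : Perm (Fin 0) // τ ^ p = 1} := ⟨⟨1, one_pow p⟩⟩
  exact Nat.card_unique

lemma card_roots_extending_inl (p : ℕ) {γ β : Type*} [Finite γ] [Finite β] {r : Perm γ}
    (hr : r ^ p = 1) :
    Nat.card {τ : Perm (γ ⊕ β) // τ ^ p = 1 ∧ ∀ j, τ (Sum.inl j) = Sum.inl (r j)} =
      rootCount p (Nat.card β) := by
  rw [← card_perm_pow_eq_one p β]
  symm
  refine Nat.card_congr <| Equiv.ofBijective
    (fun σ ↦ ⟨Perm.sumCongrHom γ β (r, σ.1), ?_, fun j ↦ by simp⟩) ⟨fun σ σ' h ↦ ?_, ?_⟩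
  · rw [← map_pow, Prod.pow_mk, hr, σ.2]
    exact map_one _
  · exact Subtype.ext
      (congrArg Prod.snd (Perm.sumCongrHom_injective (congrArg Subtype.val h)))
  · rintro ⟨τ, hτ, hτr⟩
    obtain ⟨⟨a, b⟩, rfl⟩ := Perm.mem_sumCongrHom_range_of_perm_mapsTo_inl (σ := τ) (by
      rintro _ ⟨j, rfl⟩
      exact ⟨r j, (hτr j).symm⟩)
    obtain rfl : a = r := Equiv.ext fun j ↦ by simpa using hτr j
    have hab : (a, b) ^ p = 1 :=
      Perm.sumCongrHom_injective ((map_pow _ _ _).trans (hτ.trans (map_one _).symm))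
    exact ⟨⟨b, congrArg Prod.snd hab⟩, rfl⟩

lemma card_roots_extending (p : ℕ) {γ α : Type*} [Finite α] (s : γ ↪ α) {r : Perm γ}
    (hr : r ^ p = 1) :
    Nat.card {τ : Perm α // τ ^ p = 1 ∧ ∀ j, τ (s j) = s (r j)} =
      rootCount p (Nat.card α - Nat.card γ) := by
  classical
  have : Finite γ := Finite.of_injective s s.injective
  let e : γ ⊕ ((Set.range s)ᶜ : Set α) ≃ α :=
    (sumCongr (ofInjective s s.injective) (Equiv.refl _)).trans (Set.sumCompl (Set.range s))
  have he (j : γ) : e (Sum.inl j) = s j := by simp [e]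
  have hcard : Nat.card ((Set.range s)ᶜ : Set α) = Nat.card α - Nat.card γ := by
    rw [← Nat.card_congr e, Nat.card_sum, Nat.add_sub_cancel_left]
  rw [← hcard, ← card_roots_extending_inl p hr]
  refine (Nat.card_congr <| subtypeEquiv e.permCongrHom.toEquiv fun τ ↦ and_congr ?_ ?_).symm
  · exact (map_eq_one_iff _ e.permCongrHom.injective).symm.trans (by rw [map_pow]; rfl)
  · simp [← he]

lemma card_roots_extending_embedding (p n : ℕ) {γ : Type*} [Finite γ] {r : Perm γ}
    (hr : r ^ p = 1) :
    Nat.card {x : Perm (Fin n) × (γ ↪ Fin n) //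
      x.1 ^ p = 1 ∧ ∀ j, x.1 (x.2 j) = x.2 (r j)} =
      n.descFactorial (Nat.card γ) * rootCount p (n - Nat.card γ) := by
  classical
  have : Fintype γ := Fintype.ofFinite γ
  let e : {x : Perm (Fin n) × (γ ↪ Fin n) // x.1 ^ p = 1 ∧ ∀ j, x.1 (x.2 j) = x.2 (r j)} ≃
      Σ s : γ ↪ Fin n, {τ : Perm (Fin n) // τ ^ p = 1 ∧ ∀ j, τ (s j) = s (r j)} :=
    { toFun := fun x ↦ ⟨x.1.2, x.1.1, x.2⟩
      invFun := fun y ↦ ⟨(y.2.1, y.1), y.2.2⟩ }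
  rw [Nat.card_congr e, Nat.card_sigma, Finset.sum_congr rfl fun s _ ↦
    card_roots_extending p s hr]
  simp [Fintype.card_embedding_eq]

lemma pow_apply_of_apply_add_one {e : ℕ} {α : Type*} {τ : Perm α} {s : ZMod e → α}
    (h : ∀ j, τ (s j) = s (j + 1)) (k : ℕ) : (τ ^ k) (s 0) = s k := by
  induction k with
  | zero => simp
  | succ k ih => rw [pow_succ', Perm.mul_apply, ih, h, Nat.cast_succ]

lemma minimalPeriod_of_apply_add_one {e : ℕ} {α : Type*} {τ : Perm α} {s : ZMod e ↪ α}
    (h : ∀ j, τ (s j) = s (j + 1)) : Function.minimalPeriod τ (s 0) = e := by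
  refine Nat.dvd_right_iff_eq.mp fun k ↦ ?_
  rw [← Function.isPeriodicPt_iff_minimalPeriod_dvd, ← ZMod.natCast_eq_zero_iff,
    ← s.injective.eq_iff, ← pow_apply_of_apply_add_one h, ← Perm.iterate_eq_pow]
  rfl

lemma exists_zmod_embedding {e : ℕ} [NeZero e] {α : Type*} {τ : Perm α} {x : α}
    (h : Function.minimalPeriod τ x = e) :
    ∃ s : ZMod e ↪ α, s 0 = x ∧ ∀ j, τ (s j) = s (j + 1) := by
  have hinj : Function.Injective fun j : ZMod e ↦ τ^[j.val] x := fun i j hij ↦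
    ZMod.val_injective e <|
      Function.iterate_injOn_Iio_minimalPeriod (h ▸ ZMod.val_lt i) (h ▸ ZMod.val_lt j) hij
  refine ⟨⟨_, hinj⟩, by simp, fun j ↦ ?_⟩
  have hmod := Function.iterate_mod_minimalPeriod_eq (f := τ) (x := x) (n := j.val + 1)
  simp only [Function.Embedding.coeFn_mk]
  rw [← Function.iterate_succ_apply' τ, ZMod.val_add, ZMod.val_one_eq_one_mod,
    Nat.add_mod_mod, ← hmod, h]

lemma card_roots_minimalPeriod (p n : ℕ) {e : ℕ} [NeZero e] (hep : e ∣ p) :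
    Nat.card {x : Perm (Fin n) × Fin n //
      x.1 ^ p = 1 ∧ Function.minimalPeriod x.1 x.2 = e} =
      n.descFactorial e * rootCount p (n - e) := by
  have hr : Equiv.addRight (1 : ZMod e) ^ p = 1 := by
    refine Equiv.ext fun j ↦ ?_
    rw [← Perm.iterate_eq_pow, coe_addRight, add_right_iterate,
      nsmul_one, (ZMod.natCast_eq_zero_iff p e).mpr hep]
    exact add_zero j
  have hcard := card_roots_extending_embedding p n hr
  rw [Nat.card_zmod] at hcard
  rw [← hcard]
  symm
  refine Nat.card_congr <| Equiv.ofBijective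
    (fun y ↦ ⟨(y.1.1, y.1.2 0), y.2.1, minimalPeriod_of_apply_add_one y.2.2⟩) ⟨?_, ?_⟩
  · rintro ⟨⟨τ, s⟩, hτ, hs⟩ ⟨⟨τ', s'⟩, hτ', hs'⟩ h
    obtain ⟨rfl, h0 : s 0 = s' 0⟩ := Prod.mk.inj (congrArg Subtype.val h)
    obtain rfl : s = s' := DFunLike.ext _ _ fun j ↦ by
      rw [← ZMod.natCast_zmod_val j, ← pow_apply_of_apply_add_one hs, h0,
        pow_apply_of_apply_add_one hs']
    rfl
  · rintro ⟨⟨τ, x⟩, hτ, hx⟩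
    obtain ⟨s, rfl, hs⟩ := exists_zmod_embedding hx
    exact ⟨⟨(τ, s), hτ, hs⟩, rfl⟩

-- Count pairs of a root and a point, sorted by the length of the cycle through the point.
lemma mul_rootCount_eq_sum_divisors {p : ℕ} (hp : p ≠ 0) (n : ℕ) :
    n * rootCount p n = ∑ e ∈ p.divisors, n.descFactorial e * rootCount p (n - e) := by
  classical
  have hpairs : n * rootCount p n =
      Nat.card {x : Perm (Fin n) × Fin n // x.1 ^ p = 1} := by
    rw [mul_comm, rootCount, ← Nat.card_fin n, ← Nat.card_prod, Nat.card_fin]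
    exact Nat.card_congr
      (prodSubtypeFstEquivSubtypeProd (p := fun τ : Perm (Fin n) ↦ τ ^ p = 1)).symm
  rw [hpairs, Nat.card_eq_fintype_card, Fintype.card_subtype,
    Finset.card_eq_sum_card_fiberwise (f := fun x ↦ Function.minimalPeriod x.1 x.2)
      (t := p.divisors)]
  · refine Finset.sum_congr rfl fun e he ↦ ?_
    have : NeZero e := ⟨(Nat.pos_of_mem_divisors he).ne'⟩
    rw [← card_roots_minimalPeriod p n (Nat.dvd_of_mem_divisors he),
      Nat.card_eq_fintype_card, Fintype.card_subtype, Finset.filter_filter]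
  · intro x hx
    have hx : x.1 ^ p = 1 := by simpa using hx
    refine Finset.mem_coe.mpr (Nat.mem_divisors.mpr ⟨?_, hp⟩)
    apply Function.IsPeriodicPt.minimalPeriod_dvd
    rw [Function.IsPeriodicPt, Perm.iterate_eq_pow, hx]
    rfl

lemma descFactorial_mul_rootCount_le {p : ℕ} (hp : p ≠ 0) (n : ℕ) :
    n.descFactorial p * rootCount p (n - p) ≤ n * rootCount p n := by
  rw [mul_rootCount_eq_sum_divisors hp]
  exact Finset.single_le_sum (f := fun e ↦ n.descFactorial e * rootCount p (n - e))
    (fun _ _ ↦ Nat.zero_le _) (Nat.mem_divisors_self p hp)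

lemma sum_descFactorial_card_fixed (p n k : ℕ) :
    ∑ τ : {τ : Perm (Fin n) // τ ^ p = 1},
      (Nat.card {x : Fin n // τ.1 x = x}).descFactorial k =
      n.descFactorial k * rootCount p (n - k) := by
  classical
  have hcard := card_roots_extending_embedding p n (one_pow (M := Perm (Fin k)) p)
  rw [Nat.card_fin] at hcard
  let e : {x : Perm (Fin n) × (Fin k ↪ Fin n) //
      x.1 ^ p = 1 ∧ ∀ j, x.1 (x.2 j) = x.2 ((1 : Perm (Fin k)) j)} ≃
      Σ τ : {τ : Perm (Fin n) // τ ^ p = 1}, (Fin k ↪ {x : Fin n // τ.1 x = x}) :=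
    { toFun := fun x ↦ ⟨⟨x.1.1, x.2.1⟩, x.1.2.codRestrict {y | x.1.1 y = y} x.2.2⟩
      invFun := fun y ↦
        ⟨(y.1.1, y.2.trans (Function.Embedding.subtype _)), y.1.2, fun j ↦ (y.2 j).2⟩ }
  rw [← hcard, Nat.card_congr e, Nat.card_sigma]
  simp [Fintype.card_embedding_eq]

lemma card_roots_preserving_le (p n : ℕ) (S : Finset (Fin n)) :
    Nat.card {τ : Perm (Fin n) // τ ^ p = 1 ∧ ∀ x, τ x ∈ S ↔ x ∈ S} ≤
      rootCount p S.card * rootCount p (n - S.card) := by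
  classical
  have hS : Nat.card {x // x ∈ S} = S.card := by simp
  have hSc : Nat.card {x // x ∉ S} = n - S.card := by simp [Fintype.card_subtype_compl]
  rw [← hSc, ← hS, ← card_perm_pow_eq_one, ← card_perm_pow_eq_one, ← Nat.card_prod]
  refine Nat.card_le_card_of_injective
    (fun τ ↦ (⟨τ.1.subtypePerm τ.2.2, by simp [Perm.subtypePerm_pow, τ.2.1]; rfl⟩,
      ⟨τ.1.subtypePerm fun x ↦ not_congr (τ.2.2 x), by simp [Perm.subtypePerm_pow, τ.2.1]; rfl⟩))
    fun τ τ' h ↦ Subtype.ext (Equiv.ext fun x ↦ ?_)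
  obtain ⟨hin, hout⟩ := Prod.mk.inj h
  by_cases hx : x ∈ S
  · exact congrArg Subtype.val (Equiv.congr_fun (congrArg Subtype.val hin) ⟨x, hx⟩)
  · exact congrArg Subtype.val (Equiv.congr_fun (congrArg Subtype.val hout) ⟨x, hx⟩)

end RootCount

section RootGrowth

open Equiv

/-- The number of `p`-th roots of the identity normalised by its leading growth rate
`n! ^ (1 - 1 / p)`. -/
noncomputable def rootNorm (p n : ℕ) : ℝ :=
  rootCount p n / (n.factorial : ℝ) ^ (1 - 1 / p : ℝ)

/-- A subexponential bound for both `rootNorm p n` and its inverse. -/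
noncomputable def growthBound (p n : ℕ) : ℝ :=
  ∏ i ∈ Finset.range n, (1 + p * ((i : ℝ) + 1) ^ (-(1 / p) : ℝ))

lemma rootNorm_pos (p n : ℕ) : 0 < rootNorm p n := by
  have := rootCount_pos p n
  unfold rootNorm
  positivity

@[simp]
lemma rootNorm_zero (p : ℕ) : rootNorm p 0 = 1 := by simp [rootNorm]

lemma rootCount_eq_rootNorm_mul (p n : ℕ) :
    (rootCount p n : ℝ) = rootNorm p n * (n.factorial : ℝ) ^ (1 - 1 / p : ℝ) := by
  rw [rootNorm, div_mul_cancel₀ _ (by positivity)]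

lemma descFactorial_mul_rootCount {p : ℕ} (hp : p ≠ 0) (n e : ℕ) :
    (n.descFactorial e * rootCount p (n - e) : ℝ) =
      (n.descFactorial e : ℝ) ^ (1 / p : ℝ) * rootNorm p (n - e) *
        (n.factorial : ℝ) ^ (1 - 1 / p : ℝ) := by
  rcases lt_or_ge n e with hn | hn
  · rw [Nat.descFactorial_of_lt hn, Nat.cast_zero, Real.zero_rpow (by positivity)]
    simp
  have hd : (0 : ℝ) < n.descFactorial e := by
    exact_mod_cast Nat.descFactorial_pos.mpr hn
  rw [← Nat.factorial_mul_descFactorial hn, Nat.cast_mul,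
    Real.mul_rpow (by positivity) hd.le, rootCount_eq_rootNorm_mul, Real.rpow_sub hd,
    Real.rpow_one]
  field_simp

lemma descFactorial_rpow_le (p n e : ℕ) :
    (n.descFactorial e : ℝ) ^ (1 / p : ℝ) ≤ (n : ℝ) ^ (e / p : ℝ) := by
  calc (n.descFactorial e : ℝ) ^ (1 / p : ℝ) ≤ ((n : ℝ) ^ e) ^ (1 / p : ℝ) :=
        Real.rpow_le_rpow (by positivity) (by exact_mod_cast Nat.descFactorial_le_pow n e)
          (by positivity)
    _ = (n : ℝ) ^ (e / p : ℝ) := by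
        rw [← Real.rpow_natCast, ← Real.rpow_mul (by positivity), mul_one_div]

lemma mul_rootNorm_eq_sum {p : ℕ} (hp : p ≠ 0) (n : ℕ) :
    n * rootNorm p n =
      ∑ e ∈ p.divisors, (n.descFactorial e : ℝ) ^ (1 / p : ℝ) * rootNorm p (n - e) := by
  have hn : (0 : ℝ) < (n.factorial : ℝ) ^ (1 - 1 / p : ℝ) := by positivity
  refine mul_right_cancel₀ hn.ne' ?_
  rw [mul_assoc, ← rootCount_eq_rootNorm_mul, Finset.sum_mul]
  simp_rw [← descFactorial_mul_rootCount hp]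
  exact_mod_cast mul_rootCount_eq_sum_divisors hp n

-- The right-hand side is at least `(j - p + 1) ^ p`; the left-hand side is a tangent line to it.
lemma tangent_le_descFactorial {p : ℕ} (hp : p ≠ 0) (j : ℕ) {y : ℝ} (hy : 0 < y) :
    y ^ p + p * y ^ (p - 1) * (j - (y + (p - 1))) ≤ j.descFactorial p := by
  set x : ℝ := ((j + 1 - p : ℕ) : ℝ) with hx
  have hjx : (j : ℝ) + 1 - p ≤ x := by
    rw [hx, sub_le_iff_le_add]
    exact_mod_cast le_tsub_add
  have hpow : y ^ p = y ^ (p - 1) * y := (pow_sub_one_mul hp y).symm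
  have bernoulli : 1 + p * (x / y - 1) ≤ (1 + (x / y - 1)) ^ p :=
    one_add_mul_le_pow (by have : 0 ≤ x / y := by positivity
                           linarith) p
  calc y ^ p + p * y ^ (p - 1) * (j - (y + (p - 1)))
      ≤ y ^ p + p * y ^ (p - 1) * (x - y) := by
        have : (j : ℝ) - (y + (p - 1)) ≤ x - y := by linarith
        gcongr
    _ = (1 + p * (x / y - 1)) * y ^ p := by rw [hpow]; field_simp
    _ ≤ (1 + (x / y - 1)) ^ p * y ^ p := by gcongr
    _ = x ^ p := by rw [← mul_pow]; congr 1; field_simp; ring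
    _ ≤ j.descFactorial p := by rw [hx]; exact_mod_cast Nat.pow_sub_le_descFactorial j p

-- The `p`-th factorial moment of the number of fixed points of a random root bounds its mean.
lemma succ_mul_rootCount_le {p : ℕ} (hp : p ≠ 0) (n : ℕ) :
    (n + 1) * (rootCount p n : ℝ) ≤
      (((n : ℝ) + 1) ^ (1 / p : ℝ) + (p - 1)) * rootCount p (n + 1) := by
  set y : ℝ := ((n : ℝ) + 1) ^ (1 / p : ℝ) with hy
  have hyp : y ^ p = n + 1 := by
    rw [hy, one_div, Real.rpow_inv_natCast_pow (by positivity) hp]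
  let fix (τ : {τ : Perm (Fin (n + 1)) // τ ^ p = 1}) : ℕ :=
    Nat.card {x : Fin (n + 1) // τ.1 x = x}
  have hcard : (Fintype.card {τ : Perm (Fin (n + 1)) // τ ^ p = 1} : ℝ) =
      rootCount p (n + 1) := by rw [← Nat.card_eq_fintype_card, rootCount]
  have hmean : ∑ τ, (fix τ : ℝ) = (n + 1) * rootCount p n := by
    have := sum_descFactorial_card_fixed p (n + 1) 1
    simp only [Nat.descFactorial_one, Nat.add_sub_cancel] at this
    exact_mod_cast this
  have hmoment : ∑ τ, ((fix τ).descFactorial p : ℝ) ≤ (n + 1) * rootCount p (n + 1) := by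
    have := (sum_descFactorial_card_fixed p (n + 1) p).trans_le
      (descFactorial_mul_rootCount_le hp (n + 1))
    exact_mod_cast this
  have htangent := (Finset.sum_le_sum fun τ (_ : τ ∈ Finset.univ) ↦
    tangent_le_descFactorial hp (fix τ) (y := y) (by positivity)).trans hmoment
  rw [Finset.sum_add_distrib, ← Finset.mul_sum, Finset.sum_sub_distrib, hmean,
    Finset.sum_const, Finset.sum_const, Finset.card_univ, nsmul_eq_mul, nsmul_eq_mul, hcard,
    hyp] at htangent
  have hpos : 0 < p * y ^ (p - 1) := by positivity
  nlinarith

lemma rootNorm_le_mul_rootNorm_succ {p : ℕ} (hp : p ≠ 0) (n : ℕ) :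
    rootNorm p n ≤ (1 + p * ((n : ℝ) + 1) ^ (-(1 / p) : ℝ)) * rootNorm p (n + 1) := by
  have h := succ_mul_rootCount_le hp n
  have hdesc := descFactorial_mul_rootCount hp (n + 1) 1
  have hpos := rootNorm_pos p (n + 1)
  rw [Nat.descFactorial_one, Nat.add_sub_cancel, Nat.cast_succ] at hdesc
  rw [hdesc, rootCount_eq_rootNorm_mul, ← mul_assoc, mul_le_mul_iff_left₀ (by positivity)] at h
  rw [Real.rpow_neg (by positivity)]
  set y : ℝ := ((n : ℝ) + 1) ^ (1 / p : ℝ)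
  have hy : 0 < y := by positivity
  refine le_of_mul_le_mul_left (h.trans ?_) hy
  calc (y + (p - 1)) * rootNorm p (n + 1) ≤ (y + p) * rootNorm p (n + 1) := by
        gcongr; linarith
    _ = y * ((1 + p * y⁻¹) * rootNorm p (n + 1)) := by field_simp

lemma growthBound_succ (p n : ℕ) :
    growthBound p (n + 1) = growthBound p n * (1 + p * ((n : ℝ) + 1) ^ (-(1 / p) : ℝ)) :=
  Finset.prod_range_succ _ n

lemma growthBound_pos (p n : ℕ) : 0 < growthBound p n :=
  Finset.prod_pos fun i _ ↦ by positivity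

lemma growthBound_mono (p : ℕ) : Monotone (growthBound p) := by
  refine monotone_nat_of_le_succ fun n ↦ ?_
  rw [growthBound_succ]
  exact le_mul_of_one_le_right (growthBound_pos p n).le (le_add_of_nonneg_right (by positivity))

lemma one_le_growthBound (p n : ℕ) : 1 ≤ growthBound p n := by
  simpa [growthBound] using growthBound_mono p (Nat.zero_le n)

lemma growthBound_le_pow (p n : ℕ) : growthBound p n ≤ (1 + (p : ℝ)) ^ n := by
  rw [← Finset.card_range n, ← Finset.prod_const, Finset.card_range]
  refine Finset.prod_le_prod (fun i _ ↦ by positivity) fun i _ ↦ ?_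
  have : ((i : ℝ) + 1) ^ (-(1 / p) : ℝ) ≤ 1 :=
    Real.rpow_le_one_of_one_le_of_nonpos (by simp) (by simp)
  gcongr
  exact mul_le_of_le_one_right (Nat.cast_nonneg p) this

lemma rootNorm_le_growthBound_mul {p : ℕ} (hp : p ≠ 0) (k l : ℕ) :
    rootNorm p l ≤ growthBound p k * rootNorm p (l + k) := by
  induction k with
  | zero => simp [growthBound]
  | succ k ih =>
    have hpos := rootNorm_pos p (l + k + 1)
    have hle : ((l + k : ℕ) + 1 : ℝ) ^ (-(1 / p) : ℝ) ≤ ((k : ℝ) + 1) ^ (-(1 / p) : ℝ) :=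
      Real.rpow_le_rpow_of_nonpos (by positivity) (by push_cast; linarith [l.cast_nonneg (α := ℝ)])
        (by simp)
    calc rootNorm p l ≤ growthBound p k * rootNorm p (l + k) := ih
      _ ≤ growthBound p k * ((1 + p * ((k : ℝ) + 1) ^ (-(1 / p) : ℝ)) *
            rootNorm p (l + k + 1)) := by
          have := growthBound_pos p k
          grw [rootNorm_le_mul_rootNorm_succ hp (l + k), hle]
      _ = growthBound p (k + 1) * rootNorm p (l + (k + 1)) := by
          rw [growthBound_succ, mul_assoc, add_assoc]

lemma one_le_growthBound_mul_rootNorm {p : ℕ} (hp : p ≠ 0) (n : ℕ) :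
    1 ≤ growthBound p n * rootNorm p n := by
  simpa using rootNorm_le_growthBound_mul hp n 0

lemma descFactorial_rpow_le_of_mem_divisors {p e : ℕ} (he : e ∈ p.divisors) {n : ℕ}
    (hn : n ≠ 0) :
    (n.descFactorial e : ℝ) ^ (1 / p : ℝ) ≤
      if e = p then (n : ℝ) else n * (n : ℝ) ^ (-(1 / p) : ℝ) := by
  have hp : (0 : ℝ) < p := Nat.cast_pos.mpr (Nat.pos_of_ne_zero (Nat.mem_divisors.mp he).2)
  have hn1 : (1 : ℝ) ≤ n := Nat.one_le_cast.mpr (Nat.one_le_iff_ne_zero.mpr hn)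
  refine (descFactorial_rpow_le p n e).trans ?_
  split_ifs with hep
  · rw [hep, div_self hp.ne', Real.rpow_one]
  · have hlt : (e : ℝ) + 1 ≤ p := by
      exact_mod_cast (Nat.divisor_le he).lt_of_ne hep
    rw [mul_comm, ← Real.rpow_add_one (by positivity)]
    refine Real.rpow_le_rpow_of_exponent_le hn1 ?_
    rw [div_le_iff₀ hp, add_mul, neg_mul, one_div_mul_cancel hp.ne']
    linarith

lemma sum_divisors_descFactorial_rpow_le {p : ℕ} (hp : p ≠ 0) {n : ℕ} (hn : n ≠ 0) :
    ∑ e ∈ p.divisors, (n.descFactorial e : ℝ) ^ (1 / p : ℝ) ≤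
      n * (1 + p * (n : ℝ) ^ (-(1 / p) : ℝ)) := by
  refine (Finset.sum_le_sum fun e he ↦ descFactorial_rpow_le_of_mem_divisors he hn).trans ?_
  rw [← Finset.add_sum_erase _ _ (Nat.mem_divisors_self p hp), if_pos rfl,
    Finset.sum_congr rfl fun e he ↦ if_neg (Finset.ne_of_mem_erase he), Finset.sum_const,
    nsmul_eq_mul, mul_add, mul_one, mul_left_comm]
  gcongr
  exact Finset.card_erase_le.trans p.card_divisors_le_self

lemma rootNorm_le_growthBound {p : ℕ} (hp : p ≠ 0) (n : ℕ) :
    rootNorm p n ≤ growthBound p n := by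
  induction n using Nat.strong_induction_on with
  | _ n ih =>
  obtain _ | n := n
  · simpa using one_le_growthBound p 0
  have hterm : ∀ e ∈ p.divisors, rootNorm p (n + 1 - e) ≤ growthBound p n := fun e he ↦ by
    have := Nat.pos_of_mem_divisors he
    exact (ih _ (by omega)).trans (growthBound_mono p (by omega))
  have hn : (0 : ℝ) < (n + 1 : ℕ) := by positivity
  refine le_of_mul_le_mul_left ?_ hn
  calc (n + 1 : ℕ) * rootNorm p (n + 1)
      = ∑ e ∈ p.divisors, ((n + 1).descFactorial e : ℝ) ^ (1 / p : ℝ) *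
          rootNorm p (n + 1 - e) := mul_rootNorm_eq_sum hp (n + 1)
    _ ≤ (∑ e ∈ p.divisors, ((n + 1).descFactorial e : ℝ) ^ (1 / p : ℝ)) *
          growthBound p n := by
        rw [Finset.sum_mul]
        exact Finset.sum_le_sum fun e he ↦ by grw [hterm e he]
    _ ≤ (n + 1 : ℕ) * (1 + p * ((n + 1 : ℕ) : ℝ) ^ (-(1 / p) : ℝ)) * growthBound p n := by
        have := growthBound_pos p n
        grw [sum_divisors_descFactorial_rpow_le hp n.succ_ne_zero]
    _ = (n + 1 : ℕ) * growthBound p (n + 1) := by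
        rw [growthBound_succ, Nat.cast_succ]; ring

lemma tendsto_natCast_rpow_neg {a : ℝ} (ha : 0 < a) :
    Tendsto (fun n : ℕ ↦ (n : ℝ) ^ (-a)) atTop (𝓝 0) :=
  (tendsto_rpow_neg_atTop ha).comp tendsto_natCast_atTop_atTop

lemma exists_growthBound_le_exp {p : ℕ} (hp : p ≠ 0) {η : ℝ} (hη : 0 < η) :
    ∃ B : ℝ, 0 < B ∧ ∀ k : ℕ, growthBound p k ≤ B * Real.exp (η * k) := by
  have hlim : Tendsto (fun i : ℕ ↦ 1 + p * ((i : ℝ) + 1) ^ (-(1 / p) : ℝ)) atTop (𝓝 1) := by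
    have := (tendsto_natCast_rpow_neg (a := 1 / p) (by positivity)).comp
      (tendsto_add_atTop_nat 1)
    simpa using (this.const_mul (p : ℝ)).const_add 1
  obtain ⟨N, hN⟩ := eventually_atTop.mp (hlim.eventually_le_const (Real.one_lt_exp_iff.mpr hη))
  refine ⟨(1 + p) ^ N, by positivity, fun k ↦ ?_⟩
  obtain hk | hk := le_total k N
  · calc growthBound p k ≤ growthBound p N := growthBound_mono p hk
      _ ≤ (1 + p) ^ N := growthBound_le_pow p N
      _ ≤ (1 + p) ^ N * Real.exp (η * k) :=
          le_mul_of_one_le_right (by positivity) (Real.one_le_exp (by positivity))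
  · induction k, hk using Nat.le_induction with
    | base =>
      exact (growthBound_le_pow p N).trans
        (le_mul_of_one_le_right (by positivity) (Real.one_le_exp (by positivity)))
    | succ k hk ih =>
      rw [growthBound_succ, Nat.cast_succ, mul_add_one, Real.exp_add, ← mul_assoc]
      exact mul_le_mul ih (hN k hk) (by positivity) (by positivity)

lemma tendsto_descFactorial_mul_rootCount_div {p e : ℕ} (he : e < p) :
    Tendsto (fun n : ℕ ↦ (n.descFactorial e * rootCount p (n - e) : ℝ) / (n * rootCount p n))
      atTop (𝓝 0) := by
  have hp : p ≠ 0 := by omega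
  have hexp : 0 < 1 - (e : ℝ) / p := by
    rw [sub_pos, div_lt_one (by positivity)]
    exact_mod_cast he
  have hlim := (tendsto_natCast_rpow_neg hexp).const_mul (growthBound p e)
  rw [mul_zero] at hlim
  refine squeeze_zero' (Eventually.of_forall fun n ↦ by positivity) ?_ hlim
  filter_upwards [eventually_ge_atTop (e + 1)] with n hn
  have hn0 : (0 : ℝ) < n := by exact_mod_cast (by omega : 0 < n)
  have hpos := rootNorm_pos p n
  have hpos' := rootNorm_pos p (n - e)
  have hshift := rootNorm_le_growthBound_mul hp e (n - e)
  rw [Nat.sub_add_cancel (by omega)] at hshift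
  rw [descFactorial_mul_rootCount hp, rootCount_eq_rootNorm_mul, ← mul_assoc,
    mul_div_mul_right _ _ (by positivity), div_le_iff₀ (by positivity), neg_sub,
    Real.rpow_sub_one hn0.ne']
  calc (n.descFactorial e : ℝ) ^ (1 / p : ℝ) * rootNorm p (n - e)
      ≤ (n : ℝ) ^ (e / p : ℝ) * (growthBound p e * rootNorm p n) := by
        grw [descFactorial_rpow_le, hshift]
    _ = growthBound p e * ((n : ℝ) ^ (e / p : ℝ) / n) * (n * rootNorm p n) := by field_simp

end RootGrowth

section TransitiveTuples

open Equiv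

variable {ι : Type*}

/-- Transitivity of the group generated by a tuple of permutations. -/
abbrev IsTransitiveTuple {α : Type*} (σ : ι → Perm α) : Prop :=
  MulAction.IsPretransitive (Subgroup.closure (Set.range σ)) α

lemma exists_orbit_preserved {α : Type*} {σ : ι → Perm α} (hσ : ¬ IsTransitiveTuple σ) :
    ∃ S : Set α, S.Nonempty ∧ Sᶜ.Nonempty ∧ ∀ i x, σ i x ∈ S ↔ x ∈ S := by
  obtain ⟨x, y, hxy⟩ : ∃ x y : α, y ∉ MulAction.orbit (Subgroup.closure (Set.range σ)) x := by
    by_contra! h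
    exact hσ ⟨fun x y ↦ h x y⟩
  refine ⟨_, ⟨x, MulAction.mem_orbit_self x⟩, ⟨y, hxy⟩, fun i z ↦ ?_⟩
  let g : Subgroup.closure (Set.range σ) := ⟨σ i, Subgroup.subset_closure ⟨i, rfl⟩⟩
  change g • z ∈ MulAction.orbit _ x ↔ _
  rw [← MulAction.orbit_eq_iff, ← MulAction.orbit_eq_iff, MulAction.orbit_smul]

lemma exists_small_preserved {α : Type*} [Fintype α] {σ : ι → Perm α}
    (hσ : ¬ IsTransitiveTuple σ) :
    ∃ S : Finset α, S.Nonempty ∧ 2 * S.card ≤ Fintype.card α ∧ ∀ i x, σ i x ∈ S ↔ x ∈ S := by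
  classical
  obtain ⟨S, hS, hSc, hinv⟩ := exists_orbit_preserved hσ
  have hcard := S.toFinset.card_add_card_compl
  obtain hle | hle := le_total S.toFinset.card S.toFinsetᶜ.card
  · exact ⟨S.toFinset, by simpa using hS, by omega, by simpa using hinv⟩
  · exact ⟨S.toFinsetᶜ, by simpa [← Set.toFinset_compl] using hSc, by omega,
      fun i x ↦ by simpa using not_congr (hinv i x)⟩

lemma le_choose {n k : ℕ} (hk : 1 ≤ k) (hkn : 2 * k ≤ n) : n ≤ n.choose k := by
  induction k, hk using Nat.le_induction with
  | base => simp
  | succ k _ ih =>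
    exact (ih (by omega)).trans (Nat.choose_le_succ_of_lt_half_left (by omega))

lemma two_pow_le_choose {n k : ℕ} (hkn : 2 * k ≤ n) : 2 ^ k ≤ n.choose k := by
  suffices h : 2 ^ k ≤ k.centralBinom from h.trans (Nat.choose_le_choose k hkn)
  clear hkn
  induction k with
  | zero => simp
  | succ k ih =>
    refine Nat.le_of_mul_le_mul_left ?_ k.succ_pos
    rw [Nat.succ_mul_centralBinom_succ, pow_succ]
    nlinarith

lemma rootCount_mul_rootCount_le {p : ℕ} (hp : p ≠ 0) {n k : ℕ} (hk : k ≤ n) :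
    (rootCount p k * rootCount p (n - k) : ℝ) ≤
      (n.choose k : ℝ) ^ (1 / p - 1 : ℝ) * growthBound p k ^ 2 * rootCount p n := by
  have hshift := rootNorm_le_growthBound_mul hp k (n - k)
  rw [Nat.sub_add_cancel hk] at hshift
  have hc : (0 : ℝ) < n.choose k := by exact_mod_cast Nat.choose_pos hk
  have hgrowth := growthBound_pos p k
  have hpos := rootNorm_pos p (n - k)
  have hfac : (n.factorial : ℝ) = n.choose k * (k.factorial * (n - k).factorial) := by
    rw [← mul_assoc]
    exact_mod_cast (Nat.choose_mul_factorial_mul_factorial hk).symm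
  have hcancel : (n.choose k : ℝ) ^ (1 / p - 1 : ℝ) * (n.choose k : ℝ) ^ (1 - 1 / p : ℝ) = 1 := by
    rw [← Real.rpow_add hc, sub_add_sub_cancel', sub_self, Real.rpow_zero]
  simp only [rootCount_eq_rootNorm_mul]
  rw [hfac, Real.mul_rpow hc.le (by positivity), Real.mul_rpow (by positivity) (by positivity)]
  set A : ℝ := (k.factorial : ℝ) ^ (1 - 1 / p : ℝ)
  set B : ℝ := ((n - k).factorial : ℝ) ^ (1 - 1 / p : ℝ)
  calc rootNorm p k * A * (rootNorm p (n - k) * B)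
      ≤ growthBound p k * A * (growthBound p k * rootNorm p n * B) := by
        grw [rootNorm_le_growthBound hp k, hshift]
    _ = growthBound p k ^ 2 * rootNorm p n * (1 * (A * B)) := by ring
    _ = growthBound p k ^ 2 * rootNorm p n * ((n.choose k : ℝ) ^ (1 / p - 1 : ℝ) *
          (n.choose k : ℝ) ^ (1 - 1 / p : ℝ) * (A * B)) := by rw [hcancel]
    _ = _ := by ring

variable [Fintype ι]

/-- The number of tuples `σ` of permutations of `n` points with `σ i ^ p i = 1`, i.e. of
homomorphisms from the free product of the cyclic groups `C_{p i}` to `S_n`. -/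
noncomputable def tupleCount (p : ι → ℕ) (n : ℕ) : ℕ := ∏ i, rootCount (p i) n

/-- The rational Euler characteristic of the free product of the cyclic groups `C_{p i}`. -/
noncomputable def eulerChar (p : ι → ℕ) : ℝ := ∑ i, (1 : ℝ) / p i - (Fintype.card ι - 1)

lemma nonempty_of_eulerChar_neg {p : ι → ℕ} (hχ : eulerChar p < 0) : Nonempty ι := by
  by_contra! _
  simp only [eulerChar, Finset.univ_eq_empty, Finset.sum_empty, Fintype.card_eq_zero,
    CharP.cast_eq_zero, zero_sub, neg_neg] at hχ
  exact one_pos.not_gt hχ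

lemma tupleCount_pos (p : ι → ℕ) (n : ℕ) : 0 < tupleCount p n :=
  Finset.prod_pos fun _ _ ↦ rootCount_pos _ _

lemma card_tuples_pow_eq_one (p : ι → ℕ) (n : ℕ) :
    Nat.card {σ : ι → Perm (Fin n) // ∀ i, σ i ^ p i = 1} = tupleCount p n := by
  rw [Nat.card_congr (subtypePiEquivPi (p := fun i (τ : Perm (Fin n)) ↦ τ ^ p i = 1)),
    Nat.card_pi]
  rfl

lemma card_tuples_preserving_le (p : ι → ℕ) (n : ℕ) (S : Finset (Fin n)) :
    Nat.card {σ : ι → Perm (Fin n) // ∀ i, σ i ^ p i = 1 ∧ ∀ x, σ i x ∈ S ↔ x ∈ S} ≤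
      ∏ i, rootCount (p i) S.card * rootCount (p i) (n - S.card) := by
  rw [Nat.card_congr (subtypePiEquivPi (p := fun i (τ : Perm (Fin n)) ↦
    τ ^ p i = 1 ∧ ∀ x, τ x ∈ S ↔ x ∈ S)), Nat.card_pi]
  exact Finset.prod_le_prod' fun i _ ↦ card_roots_preserving_le (p i) n S

lemma card_not_transitive_le (p : ι → ℕ) (n : ℕ) :
    Nat.card {σ : ι → Perm (Fin n) // (∀ i, σ i ^ p i = 1) ∧ ¬ IsTransitiveTuple σ} ≤
      ∑ k ∈ Finset.Icc 1 (n / 2),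
        n.choose k * ∏ i, rootCount (p i) k * rootCount (p i) (n - k) := by
  classical
  let preserving (S : Finset (Fin n)) : Finset (ι → Perm (Fin n)) :=
    {σ | ∀ i, σ i ^ p i = 1 ∧ ∀ x, σ i x ∈ S ↔ x ∈ S}
  have hsub : ({σ | (∀ i, σ i ^ p i = 1) ∧ ¬ IsTransitiveTuple σ} : Finset (ι → Perm (Fin n))) ⊆
      (Finset.Icc 1 (n / 2)).biUnion fun k ↦
        (Finset.powersetCard k Finset.univ).biUnion preserving := fun σ hσ ↦ by
    obtain ⟨hroot, htrans⟩ := (Finset.mem_filter_univ σ).mp hσ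
    obtain ⟨S, hS, hcard, hinv⟩ := exists_small_preserved htrans
    rw [Fintype.card_fin] at hcard
    refine Finset.mem_biUnion.mpr ⟨S.card, Finset.mem_Icc.mpr ⟨hS.card_pos, by omega⟩,
      Finset.mem_biUnion.mpr ⟨S, by simp, ?_⟩⟩
    exact (Finset.mem_filter_univ σ).mpr fun i ↦ ⟨hroot i, hinv i⟩
  rw [Nat.card_eq_fintype_card, Fintype.card_subtype]
  refine (Finset.card_le_card hsub).trans <| Finset.card_biUnion_le.trans <|
    Finset.sum_le_sum fun k _ ↦ ?_
  refine (Finset.card_biUnion_le_card_mul _ _ _ fun S hS ↦ ?_).trans_eq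
    (by rw [Finset.card_powersetCard, Finset.card_univ, Fintype.card_fin])
  have := card_tuples_preserving_le p n S
  rwa [Nat.card_eq_fintype_card, Fintype.card_subtype, (Finset.mem_powersetCard.mp hS).2] at this

lemma choose_mul_prod_rootCount_le {p : ι → ℕ} (hp : ∀ i, p i ≠ 0) {n k : ℕ} (hk : k ≤ n) :
    (n.choose k * ∏ i, (rootCount (p i) k * rootCount (p i) (n - k) : ℝ)) ≤
      (n.choose k : ℝ) ^ eulerChar p * (∏ i, growthBound (p i) k ^ 2) * tupleCount p n := by
  have hc : (0 : ℝ) < n.choose k := by exact_mod_cast Nat.choose_pos hk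
  have hexp : eulerChar p = 1 + ∑ i, (1 / p i - 1 : ℝ) := by
    rw [eulerChar, Finset.sum_sub_distrib, Finset.sum_const, Finset.card_univ, nsmul_one]
    ring
  calc (n.choose k * ∏ i, (rootCount (p i) k * rootCount (p i) (n - k) : ℝ))
      ≤ n.choose k * ∏ i, ((n.choose k : ℝ) ^ (1 / p i - 1 : ℝ) * growthBound (p i) k ^ 2 *
          rootCount (p i) n) := by
        refine mul_le_mul_of_nonneg_left (Finset.prod_le_prod (fun i _ ↦ by positivity)
          fun i _ ↦ rootCount_mul_rootCount_le (hp i) hk) hc.le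
    _ = _ := by
        rw [Finset.prod_mul_distrib, Finset.prod_mul_distrib, ← Real.rpow_sum_of_pos hc, hexp,
          Real.rpow_add hc, Real.rpow_one, tupleCount, Nat.cast_prod]
        ring

lemma exists_prod_growthBound_le_exp {p : ι → ℕ} (hp : ∀ i, p i ≠ 0) {ε : ℝ} (hε : 0 < ε) :
    ∃ C : ℝ, 0 < C ∧ ∀ k : ℕ, ∏ i, growthBound (p i) k ^ 2 ≤ C * Real.exp (ε * k) := by
  set m : ℝ := (Fintype.card ι : ℝ) with hm
  have hη : 0 < ε / (2 * (m + 1)) := by positivity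
  have hm1 : m / (m + 1) ≤ 1 := div_le_one_of_le₀ (by linarith) (by positivity)
  choose B hB hgrowth using fun i ↦ exists_growthBound_le_exp (hp i) hη
  refine ⟨∏ i, B i ^ 2, Finset.prod_pos fun i _ ↦ pow_pos (hB i) 2, fun k ↦ ?_⟩
  calc ∏ i, growthBound (p i) k ^ 2
      ≤ ∏ i, (B i * Real.exp (ε / (2 * (m + 1)) * k)) ^ 2 := by
        gcongr with i
        exacts [(growthBound_pos (p i) k).le, hgrowth i k]
    _ = (∏ i, B i ^ 2) * Real.exp (m / (m + 1) * (ε * k)) := by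
        simp only [mul_pow, Finset.prod_mul_distrib, Finset.prod_const, Finset.card_univ,
          ← Real.exp_nat_mul, Nat.cast_ofNat, ← hm]
        congr 2
        field_simp
    _ ≤ (∏ i, B i ^ 2) * Real.exp (ε * k) := by
        have : m / (m + 1) * (ε * k) ≤ ε * k := mul_le_of_le_one_left (by positivity) hm1
        gcongr

lemma choose_rpow_le {χ : ℝ} (hχ : χ ≤ 0) {n k : ℕ} (hk : 1 ≤ k) (hkn : 2 * k ≤ n) :
    (n.choose k : ℝ) ^ χ ≤ (n : ℝ) ^ (χ / 2) * Real.exp (χ / 2 * Real.log 2 * k) := by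
  have hn : (0 : ℝ) < n := by exact_mod_cast (by omega : 0 < n)
  have hle : (n : ℝ) ≤ n.choose k := by exact_mod_cast le_choose hk hkn
  have hpow : (2 : ℝ) ^ k ≤ n.choose k := by exact_mod_cast two_pow_le_choose hkn
  calc (n.choose k : ℝ) ^ χ = (n.choose k : ℝ) ^ (χ / 2) * (n.choose k : ℝ) ^ (χ / 2) := by
        rw [← Real.rpow_add (hn.trans_le hle), add_halves]
    _ ≤ (n : ℝ) ^ (χ / 2) * ((2 : ℝ) ^ k) ^ (χ / 2) :=
        mul_le_mul (Real.rpow_le_rpow_of_nonpos hn hle (by linarith))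
          (Real.rpow_le_rpow_of_nonpos (by positivity) hpow (by linarith))
          (by positivity) (by positivity)
    _ = (n : ℝ) ^ (χ / 2) * Real.exp (χ / 2 * Real.log 2 * k) := by
        rw [Real.rpow_def_of_pos (by positivity : (0 : ℝ) < 2 ^ k), Real.log_pow]
        ring_nf

lemma exists_choose_mul_prod_rootCount_le {p : ι → ℕ} (hp : ∀ i, p i ≠ 0)
    (hχ : eulerChar p < 0) :
    ∃ C > 0, ∃ ε > 0, ∀ n k : ℕ, 1 ≤ k → 2 * k ≤ n →
      (n.choose k * ∏ i, (rootCount (p i) k * rootCount (p i) (n - k) : ℝ)) ≤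
        C * (n : ℝ) ^ (eulerChar p / 2) * tupleCount p n * Real.exp (-ε) ^ k := by
  set ε : ℝ := -eulerChar p / 4 * Real.log 2 with hε
  have hε0 : 0 < ε := mul_pos (by linarith) (Real.log_pos one_lt_two)
  obtain ⟨C, hC, hgrowth⟩ := exists_prod_growthBound_le_exp hp hε0
  refine ⟨C, hC, ε, hε0, fun n k hk hkn ↦ ?_⟩
  have : 0 ≤ ∏ i, growthBound (p i) k ^ 2 := Finset.prod_nonneg fun i _ ↦ by positivity
  calc (n.choose k * ∏ i, (rootCount (p i) k * rootCount (p i) (n - k) : ℝ))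
      ≤ (n.choose k : ℝ) ^ eulerChar p * (∏ i, growthBound (p i) k ^ 2) * tupleCount p n :=
        choose_mul_prod_rootCount_le hp (by omega)
    _ ≤ ((n : ℝ) ^ (eulerChar p / 2) * Real.exp (eulerChar p / 2 * Real.log 2 * k)) *
          (C * Real.exp (ε * k)) * tupleCount p n := by
        grw [choose_rpow_le hχ.le hk hkn, hgrowth k]
    _ = C * (n : ℝ) ^ (eulerChar p / 2) * tupleCount p n *
          Real.exp (eulerChar p / 2 * Real.log 2 * k + ε * k) := by rw [Real.exp_add]; ring
    _ = C * (n : ℝ) ^ (eulerChar p / 2) * tupleCount p n * Real.exp (-ε) ^ k := by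
        rw [← Real.exp_nat_mul, hε]; ring_nf

lemma tendsto_card_not_transitive_div {p : ι → ℕ} (hp : ∀ i, p i ≠ 0) (hχ : eulerChar p < 0) :
    Tendsto (fun n : ℕ ↦
      (Nat.card {σ : ι → Perm (Fin n) // (∀ i, σ i ^ p i = 1) ∧ ¬ IsTransitiveTuple σ} : ℝ) /
        tupleCount p n) atTop (𝓝 0) := by
  obtain ⟨C, hC, ε, hε, hterm⟩ := exists_choose_mul_prod_rootCount_le hp hχ
  set r : ℝ := Real.exp (-ε)
  have hr : r < 1 := Real.exp_lt_one_iff.mpr (by linarith)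
  have hlim := (tendsto_natCast_rpow_neg (a := -(eulerChar p / 2)) (by linarith)).const_mul
    (C * (1 - r)⁻¹)
  rw [mul_zero, neg_neg] at hlim
  refine squeeze_zero (fun n ↦ by positivity) (fun n ↦ ?_) hlim
  have hT : (0 : ℝ) < tupleCount p n := Nat.cast_pos.mpr (tupleCount_pos p n)
  have hgeom : ∑ k ∈ Finset.Icc 1 (n / 2), r ^ k ≤ (1 - r)⁻¹ := by
    rw [← tsum_geometric_of_lt_one (Real.exp_pos _).le hr]
    exact (summable_geometric_of_lt_one (Real.exp_pos _).le hr).sum_le_tsum _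
      fun k _ ↦ pow_nonneg (Real.exp_pos _).le k
  rw [div_le_iff₀ hT]
  calc (Nat.card {σ : ι → Perm (Fin n) // (∀ i, σ i ^ p i = 1) ∧ ¬ IsTransitiveTuple σ} : ℝ)
      ≤ ∑ k ∈ Finset.Icc 1 (n / 2),
          (n.choose k * ∏ i, (rootCount (p i) k * rootCount (p i) (n - k) : ℝ)) := by
        exact_mod_cast card_not_transitive_le p n
    _ ≤ ∑ k ∈ Finset.Icc 1 (n / 2),
          C * (n : ℝ) ^ (eulerChar p / 2) * tupleCount p n * r ^ k := by
        refine Finset.sum_le_sum fun k hk ↦ ?_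
        rw [Finset.mem_Icc] at hk
        exact hterm n k hk.1 (by omega)
    _ ≤ C * (n : ℝ) ^ (eulerChar p / 2) * tupleCount p n * (1 - r)⁻¹ := by
        rw [← Finset.mul_sum]
        gcongr
    _ = C * (1 - r)⁻¹ * (n : ℝ) ^ (eulerChar p / 2) * tupleCount p n := by ring

end TransitiveTuples

section Words

variable {ι M : Type*} [Monoid M]

/-- The product `f i_{k-1} ^ a_{k-1} ⋯ f i_0 ^ a_0` of the first `k` syllables `w j = (i_j, a_j)` of
a word. New syllables are added on the left, so that for permutations the products applied to a
point trace out the path of that point. -/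
def prefixProd (f : ι → M) (w : ℕ → ι × ℕ) : ℕ → M
  | 0 => 1
  | k + 1 => f (w k).1 ^ (w k).2 * prefixProd f w k

lemma prefixProd_congr (f : ι → M) {w w' : ℕ → ι × ℕ} {k : ℕ} (h : ∀ j < k, w j = w' j) :
    prefixProd f w k = prefixProd f w' k := by
  induction k with
  | zero => rfl
  | succ k ih =>
    simp only [prefixProd, h k k.lt_succ_self, ih fun j hj ↦ h j (hj.trans k.lt_succ_self)]

lemma map_prefixProd {N : Type*} [Monoid N] (φ : M →* N) (f : ι → M) (w : ℕ → ι × ℕ) (k : ℕ) :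
    φ (prefixProd f w k) = prefixProd (fun i ↦ φ (f i)) w k := by
  induction k with
  | zero => exact map_one φ
  | succ k ih => simp only [prefixProd, map_mul, map_pow, ih]

/-- The first `r` syllables of `w` form a reduced word in a free product of cyclic groups of
orders `p i`: no syllable is trivial and consecutive ones lie in different factors. -/
structure IsReducedWord (p : ι → ℕ) (w : ℕ → ι × ℕ) (r : ℕ) : Prop where
  not_dvd : ∀ k < r, ¬ p (w k).1 ∣ (w k).2
  ne_succ : ∀ k, k + 1 < r → (w k).1 ≠ (w (k + 1)).1

namespace IsReducedWord

variable {p : ι → ℕ} {w : ℕ → ι × ℕ} {r : ℕ}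

lemma of_succ (h : IsReducedWord p w (r + 1)) : IsReducedWord p w r :=
  ⟨fun k hk ↦ h.not_dvd k (by omega), fun k hk ↦ h.ne_succ k (by omega)⟩

lemma exists_pow_mul_of_ne {f : ι → M} (hf : ∀ i, f i ^ p i = 1) (hw : IsReducedWord p w r)
    {i : ι} (hi : ∀ k, k + 1 = r → (w k).1 ≠ i) (a : ℕ) :
    ∃ w' r', IsReducedWord p w' r' ∧ prefixProd f w' r' = f i ^ a * prefixProd f w r := by
  by_cases ha : p i ∣ a
  · obtain ⟨b, rfl⟩ := ha
    exact ⟨w, r, hw, by rw [pow_mul, hf, one_pow, one_mul]⟩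
  have hold : ∀ k < r, Function.update w r (i, a) k = w k := fun k hk ↦
    Function.update_of_ne hk.ne _ _
  have hnew : Function.update w r (i, a) r = (i, a) := Function.update_self ..
  refine ⟨Function.update w r (i, a), r + 1, ⟨fun k hk ↦ ?_, fun k hk ↦ ?_⟩, ?_⟩
  · obtain hk | rfl := Nat.lt_succ_iff_lt_or_eq.mp hk
    · simpa only [hold k hk] using hw.not_dvd k hk
    · simpa only [hnew] using ha
  · obtain hk | rfl := Nat.lt_succ_iff_lt_or_eq.mp hk
    · simpa only [hold k (by omega), hold (k + 1) hk] using hw.ne_succ k hk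
    · simpa only [hold k k.lt_succ_self, hnew] using hi k rfl
  · rw [prefixProd, hnew, prefixProd_congr f hold]

lemma exists_pow_mul {f : ι → M} (hf : ∀ i, f i ^ p i = 1) (hw : IsReducedWord p w r)
    (i : ι) (a : ℕ) :
    ∃ w' r', IsReducedWord p w' r' ∧ prefixProd f w' r' = f i ^ a * prefixProd f w r := by
  obtain _ | r := r
  · exact hw.exists_pow_mul_of_ne hf (by simp) a
  by_cases hi : (w r).1 = i
  · obtain ⟨w', r', hw', h⟩ := hw.of_succ.exists_pow_mul_of_ne hf
      (fun k hk ↦ by subst hk; exact hi ▸ hw.ne_succ k k.succ.lt_succ_self) (a + (w r).2)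
    exact ⟨w', r', hw', by rw [h, prefixProd, hi, pow_add, mul_assoc]⟩
  · exact hw.exists_pow_mul_of_ne hf (fun k hk ↦ by rwa [Nat.succ_injective hk]) a

end IsReducedWord

lemma exists_isReducedWord {G : Type*} [Group G] {f : ι → G} {p : ι → ℕ} (hp : ∀ i, p i ≠ 0)
    (hf : ∀ i, f i ^ p i = 1) (hgen : Subgroup.closure (Set.range f) = ⊤) [Nonempty ι] (g : G) :
    ∃ w r, IsReducedWord p w r ∧ prefixProd f w r = g := by
  have hg : g ∈ Subgroup.closure (Set.range f) := hgen ▸ Subgroup.mem_top g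
  induction hg using Subgroup.closure_induction_left with
  | one => exact ⟨fun _ ↦ (Classical.arbitrary ι, 0), 0, ⟨by simp, by simp⟩, rfl⟩
  | mul_left x hx y _ ih =>
    obtain ⟨i, rfl⟩ := hx
    obtain ⟨w, r, hw, rfl⟩ := ih
    simpa only [pow_one] using hw.exists_pow_mul hf i 1
  | inv_mul_cancel x hx y _ ih =>
    obtain ⟨i, rfl⟩ := hx
    obtain ⟨w, r, hw, rfl⟩ := ih
    have hinv : (f i)⁻¹ = f i ^ (p i - 1) := by
      rw [inv_eq_iff_mul_eq_one, mul_pow_sub_one (hp i), hf]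
    simpa only [hinv] using hw.exists_pow_mul hf i (p i - 1)

end Words

section FirstCollision

open Equiv

variable {ι α : Type*} {σ : ι → Perm α} {w : ℕ → ι × ℕ} {x : α} {k : ℕ}

/-- Step `k` of the path of `x` along `w` ends on a cycle of some `σ i`, `i ≠ (w k).1`, that the
path has already met. -/
def IsCollision (σ : ι → Perm α) (w : ℕ → ι × ℕ) (x : α) (k : ℕ) : Prop :=
  ∃ i ≠ (w k).1, ∃ l ≤ k, (σ i).SameCycle (prefixProd σ w l x) (prefixProd σ w (k + 1) x)

/-- Step `k` of the path of `x` along `w` moves the point and is the first collision. -/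
structure IsFirstCollision (σ : ι → Perm α) (w : ℕ → ι × ℕ) (x : α) (k : ℕ) : Prop where
  moves : prefixProd σ w (k + 1) x ≠ prefixProd σ w k x
  collision : IsCollision σ w x k
  first : ∀ j < k, ¬ IsCollision σ w x j

lemma sameCycle_prefixProd_succ (σ : ι → Perm α) (w : ℕ → ι × ℕ) (x : α) (k : ℕ) :
    (σ (w k).1).SameCycle (prefixProd σ w k x) (prefixProd σ w (k + 1) x) :=
  ⟨(w k).2, rfl⟩

lemma exists_stays_or_isFirstCollision {r : ℕ} (hr : r ≠ 0)
    (hw : ∀ k, k + 1 < r → (w k).1 ≠ (w (k + 1)).1) (hx : prefixProd σ w r x = x) :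
    ∃ k < r, prefixProd σ w (k + 1) x = prefixProd σ w k x ∨ IsFirstCollision σ w x k := by
  by_contra! hcon
  have hnone : ∀ j < r, ¬ IsCollision σ w x j := by
    intro j
    induction j using Nat.strong_induction_on with
    | _ j ih =>
      exact fun hj hcol ↦
        (hcon j hj).2 ⟨(hcon j hj).1, hcol, fun l hl ↦ ih l hl (hl.trans hj)⟩
  obtain _ | _ | k := r
  · exact hr rfl
  · exact (hcon 0 one_pos).1 hx
  · refine hnone k (by omega) ⟨_, (hw k (by omega)).symm, 0, k.zero_le, ?_⟩
    have hlast := sameCycle_prefixProd_succ σ w x (k + 1)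
    rw [hx] at hlast
    exact hlast.symm

lemma IsFirstCollision.prefixProd_ne (h : IsFirstCollision σ w x k)
    (hw : ∀ l < k, (w l).1 ≠ (w (l + 1)).1) {l : ℕ} (hl : l ≤ k) :
    prefixProd σ w l x ≠ prefixProd σ w (k + 1) x := by
  intro heq
  obtain rfl | hlt := hl.eq_or_lt
  · exact h.moves heq.symm
  obtain _ | k := k
  · exact absurd hlt l.not_lt_zero
  refine h.first k k.lt_succ_self
    ⟨_, (hw k k.lt_succ_self).symm, l, Nat.le_of_lt_succ hlt, ?_⟩
  rw [heq]
  exact (sameCycle_prefixProd_succ σ w x (k + 1)).symm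

lemma IsFirstCollision.exists_certificate [Finite α] {p : ι → ℕ} (hp : ∀ i, p i ≠ 0)
    (hσ : ∀ i, σ i ^ p i = 1) (h : IsFirstCollision σ w x k) :
    ∃ t : Fin (k + 1) × (Σ i, Fin (p i)), t.2.1 ≠ (w k).1 ∧
      (σ t.2.1 ^ (t.2.2 : ℕ)) (prefixProd σ w t.1 x) = prefixProd σ w (k + 1) x := by
  obtain ⟨i, hi, l, hl, hs⟩ := h.collision
  obtain ⟨b, hb, hbx⟩ := hs.exists_pow_eq'
  have hbp : b < p i := hb.trans_le (orderOf_le_of_pow_eq_one (Nat.pos_of_ne_zero (hp i)) (hσ i))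
  exact ⟨(⟨l, Nat.lt_succ_of_le hl⟩, ⟨i, b, hbp⟩), hi, hbx⟩

variable [DecidableEq ι] [DecidableEq α]

/-- The tuple obtained from `σ` by exchanging the points `y` and `u` in `σ i` only. -/
def switchTuple (σ : ι → Perm α) (i : ι) (y u : α) : ι → Perm α :=
  Function.update σ i (swap y u * σ i * (swap y u)⁻¹)

lemma switchTuple_pow_eq_one {p : ι → ℕ} (hσ : ∀ i, σ i ^ p i = 1) (i : ι) (y u : α) (j : ι) :
    switchTuple σ i y u j ^ p j = 1 := by
  obtain rfl | hj := eq_or_ne j i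
  · rw [switchTuple, Function.update_self, conj_pow, hσ, mul_one, mul_inv_cancel]
  · rw [switchTuple, Function.update_of_ne hj, hσ]

lemma switchTuple_self_pow_apply {i : ι} {y u z : α} (hy : z ≠ y) (hu : z ≠ u) (a : ℕ) :
    (switchTuple σ i y u i ^ a) z = swap y u ((σ i ^ a) z) := by
  rw [switchTuple, Function.update_self, conj_pow, swap_inv, Perm.mul_apply, Perm.mul_apply,
    swap_apply_of_ne_of_ne hy hu]

lemma prefixProd_switchTuple_of_le {i : ι} {y u : α} (hy : ∀ l ≤ k, prefixProd σ w l x ≠ y)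
    (hu : ∀ l ≤ k, prefixProd σ w l x ≠ u) {l : ℕ} (hl : l ≤ k) :
    prefixProd (switchTuple σ i y u) w l x = prefixProd σ w l x := by
  induction l with
  | zero => rfl
  | succ l ih =>
    have hl' : l ≤ k := (l.le_succ).trans hl
    change (switchTuple σ i y u (w l).1 ^ (w l).2) (prefixProd (switchTuple σ i y u) w l x) = _
    rw [ih hl']
    by_cases hi : (w l).1 = i
    · subst hi
      rw [switchTuple_self_pow_apply (hy l hl') (hu l hl')]
      exact swap_apply_of_ne_of_ne (hy (l + 1) hl) (hu (l + 1) hl)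
    · rw [switchTuple, Function.update_of_ne hi]
      rfl

lemma prefixProd_switchTuple_succ
    (hne : ∀ l ≤ k, prefixProd σ w l x ≠ prefixProd σ w (k + 1) x) {u : α}
    (hu : ∀ l ≤ k, prefixProd σ w l x ≠ u) :
    prefixProd (switchTuple σ (w k).1 (prefixProd σ w (k + 1) x) u) w (k + 1) x = u := by
  change (switchTuple σ (w k).1 _ u (w k).1 ^ (w k).2) (prefixProd (switchTuple _ _ _ _) w k x) = u
  rw [prefixProd_switchTuple_of_le hne hu le_rfl,
    switchTuple_self_pow_apply (hne k le_rfl) (hu k le_rfl)]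
  exact swap_apply_left _ _

/- The switched path shows `u` and the path up to step `k`; the certificate `(l, j, b)` of the
collision, whose `j` is a position that was not switched, then gives back the endpoint `y`. -/
lemma switchTuple_injective {σ₁ σ₂ : ι → Perm α} {u₁ u₂ : α}
    (hne₁ : ∀ l ≤ k, prefixProd σ₁ w l x ≠ prefixProd σ₁ w (k + 1) x)
    (hne₂ : ∀ l ≤ k, prefixProd σ₂ w l x ≠ prefixProd σ₂ w (k + 1) x)
    (hu₁ : ∀ l ≤ k, prefixProd σ₁ w l x ≠ u₁) (hu₂ : ∀ l ≤ k, prefixProd σ₂ w l x ≠ u₂)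
    {l : ℕ} (hl : l ≤ k) {j : ι} (hj : j ≠ (w k).1) {b : ℕ}
    (hb₁ : (σ₁ j ^ b) (prefixProd σ₁ w l x) = prefixProd σ₁ w (k + 1) x)
    (hb₂ : (σ₂ j ^ b) (prefixProd σ₂ w l x) = prefixProd σ₂ w (k + 1) x)
    (h : switchTuple σ₁ (w k).1 (prefixProd σ₁ w (k + 1) x) u₁ =
      switchTuple σ₂ (w k).1 (prefixProd σ₂ w (k + 1) x) u₂) :
    σ₁ = σ₂ ∧ u₁ = u₂ := by
  have hu : u₁ = u₂ := by
    rw [← prefixProd_switchTuple_succ hne₁ hu₁, ← prefixProd_switchTuple_succ hne₂ hu₂, h]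
  have hoff : ∀ i ≠ (w k).1, σ₁ i = σ₂ i := fun i hi ↦ by
    simpa only [switchTuple, Function.update_of_ne hi] using congrFun h i
  have hend : prefixProd σ₁ w (k + 1) x = prefixProd σ₂ w (k + 1) x := by
    rw [← hb₁, ← hb₂, hoff j hj, ← prefixProd_switchTuple_of_le hne₁ hu₁ hl,
      ← prefixProd_switchTuple_of_le hne₂ hu₂ hl, h]
  refine ⟨funext fun i ↦ ?_, hu⟩
  by_cases hi : i = (w k).1
  · have hon := congrFun h (w k).1
    simp only [switchTuple, Function.update_self, hend, hu] at hon
    exact hi ▸ mul_left_cancel (mul_right_cancel hon)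
  · exact hoff i hi

end FirstCollision

section FixedPoints

open Equiv

variable {ι : Type*} {p : ι → ℕ} {w : ℕ → ι × ℕ} {n : ℕ}

lemma sub_le_card_unvisited (v : ℕ → Fin n) (k : ℕ) :
    n - (k + 1) ≤ Nat.card {u : Fin n // ∀ l ≤ k, v l ≠ u} := by
  have hcard : ((Finset.range (k + 1)).image v).card ≤ k + 1 :=
    Finset.card_image_le.trans (Finset.card_range _).le
  calc n - (k + 1) ≤ ((Finset.range (k + 1)).image v)ᶜ.card := by
        rw [Finset.card_compl, Fintype.card_fin]
        exact Nat.sub_le_sub_left hcard n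
    _ = Nat.card {u : Fin n // ∀ l ≤ k, v l ≠ u} := by
        rw [← Nat.card_eq_finsetCard]
        exact Nat.card_congr (subtypeEquivRight fun u ↦ by simp)

lemma card_roots_pow_fixed_le {q a : ℕ} (hq : q ≠ 0) (ha : ¬ q ∣ a) :
    Nat.card {y : Perm (Fin n) × Fin n // y.1 ^ q = 1 ∧ (y.1 ^ a) y.2 = y.2} ≤
      ∑ e ∈ q.properDivisors, n.descFactorial e * rootCount q (n - e) := by
  classical
  have hperiod : ∀ y : Perm (Fin n) × Fin n, y.1 ^ q = 1 → (y.1 ^ a) y.2 = y.2 →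
      Function.minimalPeriod y.1 y.2 ∈ q.properDivisors := by
    intro y hy hya
    have hdvd : ∀ b, (y.1 ^ b) y.2 = y.2 → Function.minimalPeriod y.1 y.2 ∣ b := fun b hb ↦
      Function.IsPeriodicPt.minimalPeriod_dvd
        (by rwa [Function.IsPeriodicPt, Function.IsFixedPt, ← Perm.coe_pow])
    have hdq := hdvd q (by rw [hy, Perm.one_apply])
    exact Nat.mem_properDivisors.mpr ⟨hdq, (Nat.le_of_dvd (Nat.pos_of_ne_zero hq) hdq).lt_of_ne
      fun heq ↦ ha (heq ▸ hdvd a hya)⟩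
  rw [Nat.card_eq_fintype_card, Fintype.card_subtype,
    Finset.card_eq_sum_card_fiberwise (f := fun y ↦ Function.minimalPeriod y.1 y.2)
      (t := q.properDivisors) fun y hy ↦ ?_]
  · refine Finset.sum_le_sum fun e he ↦ ?_
    obtain ⟨heq, -⟩ := Nat.mem_properDivisors.mp he
    have : NeZero e := ⟨(Nat.pos_of_dvd_of_pos heq (Nat.pos_of_ne_zero hq)).ne'⟩
    rw [← card_roots_minimalPeriod q n heq, Nat.card_eq_fintype_card, Fintype.card_subtype,
      Finset.filter_filter]
    exact Finset.card_le_card (Finset.monotone_filter_right _ fun y _ hy ↦ ⟨hy.1.1, hy.2⟩)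
  · obtain ⟨hyq, hya⟩ := (Finset.mem_filter.mp hy).2
    exact hperiod y hyq hya

lemma card_prefixProd_fixed_le [Finite ι] {r : ℕ} (hr : r ≠ 0) (hw : IsReducedWord p w r) :
    Nat.card {y : (ι → Perm (Fin n)) × Fin n //
        (∀ i, y.1 i ^ p i = 1) ∧ prefixProd y.1 w r y.2 = y.2} ≤
      ∑ k ∈ Finset.range r, (Nat.card {y : (ι → Perm (Fin n)) × Fin n // (∀ i, y.1 i ^ p i = 1) ∧
          prefixProd y.1 w (k + 1) y.2 = prefixProd y.1 w k y.2} +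
        ∑ x, Nat.card {σ : ι → Perm (Fin n) //
          (∀ i, σ i ^ p i = 1) ∧ IsFirstCollision σ w x k}) := by
  classical
  have := Fintype.ofFinite ι
  let stays (k : ℕ) : Finset ((ι → Perm (Fin n)) × Fin n) := {y | (∀ i, y.1 i ^ p i = 1) ∧
    prefixProd y.1 w (k + 1) y.2 = prefixProd y.1 w k y.2}
  let collides (k : ℕ) (x : Fin n) : Finset (ι → Perm (Fin n)) :=
    {σ | (∀ i, σ i ^ p i = 1) ∧ IsFirstCollision σ w x k}
  have hcover : ({y | (∀ i, y.1 i ^ p i = 1) ∧ prefixProd y.1 w r y.2 = y.2} :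
      Finset ((ι → Perm (Fin n)) × Fin n)) ⊆ (Finset.range r).biUnion fun k ↦
        stays k ∪ Finset.univ.biUnion fun x ↦ (collides k x).image (·, x) := by
    rintro ⟨σ, x⟩ hy
    obtain ⟨hσ, hfix⟩ := (Finset.mem_filter.mp hy).2
    obtain ⟨k, hk, hstay | hcol⟩ := exists_stays_or_isFirstCollision hr hw.ne_succ hfix
    · simp only [Finset.mem_biUnion, Finset.mem_union]
      exact ⟨k, Finset.mem_range.mpr hk, .inl (by simp [stays, hσ, hstay])⟩
    · simp only [Finset.mem_biUnion, Finset.mem_union, Finset.mem_image]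
      exact ⟨k, Finset.mem_range.mpr hk,
        .inr ⟨x, Finset.mem_univ x, σ, by simp [collides, hσ, hcol], rfl⟩⟩
  simp only [Nat.card_eq_fintype_card, Fintype.card_subtype]
  refine (Finset.card_le_card hcover).trans (Finset.card_biUnion_le.trans
    (Finset.sum_le_sum fun k _ ↦ (Finset.card_union_le _ _).trans (Nat.add_le_add_left ?_ _)))
  exact Finset.card_biUnion_le.trans (Finset.sum_le_sum fun x _ ↦ Finset.card_image_le)

variable [Fintype ι]

lemma card_isFirstCollision_mul_le (hp : ∀ i, p i ≠ 0) {k : ℕ}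
    (hw : ∀ l < k, (w l).1 ≠ (w (l + 1)).1) (x : Fin n) :
    Nat.card {σ : ι → Perm (Fin n) // (∀ i, σ i ^ p i = 1) ∧ IsFirstCollision σ w x k} *
      (n - (k + 1)) ≤ tupleCount p n * ((k + 1) * ∑ i, p i) := by
  classical
  let B := {σ : ι → Perm (Fin n) // (∀ i, σ i ^ p i = 1) ∧ IsFirstCollision σ w x k}
  let U (σ : B) := {u : Fin n // ∀ l ≤ k, prefixProd σ.1 w l x ≠ u}
  choose cert hcert_ne hcert using fun σ : B ↦ σ.2.2.exists_certificate hp σ.2.1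
  let F (z : Σ σ : B, U σ) : {σ : ι → Perm (Fin n) // ∀ i, σ i ^ p i = 1} ×
      (Fin (k + 1) × (Σ i, Fin (p i))) :=
    (⟨switchTuple z.1.1 (w k).1 (prefixProd z.1.1 w (k + 1) x) z.2.1,
      switchTuple_pow_eq_one z.1.2.1 _ _ _⟩, cert z.1)
  have hF : Function.Injective F := by
    rintro ⟨σ₁, u₁⟩ ⟨σ₂, u₂⟩ h
    have hc : cert σ₁ = cert σ₂ := congrArg Prod.snd h
    obtain ⟨hσ, hu⟩ := switchTuple_injective (fun l ↦ σ₁.2.2.prefixProd_ne hw)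
      (fun l ↦ σ₂.2.2.prefixProd_ne hw) u₁.2 u₂.2 (Nat.le_of_lt_succ (cert σ₁).1.2)
      (hcert_ne σ₁) (hcert σ₁) (hc ▸ hcert σ₂) (congrArg (fun z ↦ z.1.1) h)
    obtain rfl : σ₁ = σ₂ := Subtype.ext hσ
    obtain rfl : u₁ = u₂ := Subtype.ext hu
    rfl
  calc Nat.card B * (n - (k + 1)) = ∑ _σ : B, (n - (k + 1)) := by
        rw [Finset.sum_const, Finset.card_univ, smul_eq_mul, Nat.card_eq_fintype_card]
    _ ≤ ∑ σ : B, Nat.card (U σ) := Finset.sum_le_sum fun σ _ ↦ sub_le_card_unvisited _ k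
    _ = Nat.card (Σ σ : B, U σ) := Nat.card_sigma.symm
    _ ≤ _ := Nat.card_le_card_of_injective F hF
    _ = tupleCount p n * ((k + 1) * ∑ i, p i) := by
        rw [Nat.card_prod, card_tuples_pow_eq_one, Nat.card_prod, Nat.card_sigma]
        simp only [Nat.card_eq_fintype_card, Fintype.card_fin]

lemma card_stays_mul_le (hp : ∀ i, p i ≠ 0) {k : ℕ} (hw : ¬ p (w k).1 ∣ (w k).2) :
    Nat.card {y : (ι → Perm (Fin n)) × Fin n // (∀ i, y.1 i ^ p i = 1) ∧
        prefixProd y.1 w (k + 1) y.2 = prefixProd y.1 w k y.2} * rootCount (p (w k).1) n ≤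
      tupleCount p n * ∑ e ∈ (p (w k).1).properDivisors,
        n.descFactorial e * rootCount (p (w k).1) (n - e) := by
  classical
  set i₀ := (w k).1
  let F (z : {y : (ι → Perm (Fin n)) × Fin n // (∀ i, y.1 i ^ p i = 1) ∧
        prefixProd y.1 w (k + 1) y.2 = prefixProd y.1 w k y.2} ×
        {τ : Perm (Fin n) // τ ^ p i₀ = 1}) :
      {σ : ι → Perm (Fin n) // ∀ i, σ i ^ p i = 1} ×
        {y : Perm (Fin n) × Fin n // y.1 ^ p i₀ = 1 ∧ (y.1 ^ (w k).2) y.2 = y.2} :=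
    (⟨Function.update z.1.1.1 i₀ z.2.1,
      (Function.forall_update_iff _ (p := fun i τ ↦ τ ^ p i = 1)).mpr
        ⟨z.2.2, fun i _ ↦ z.1.2.1 i⟩⟩,
      ⟨(z.1.1.1 i₀, prefixProd z.1.1.1 w k z.1.1.2), z.1.2.1 i₀, z.1.2.2⟩)
  have hF : Function.Injective F := by
    rintro ⟨⟨⟨σ₁, x₁⟩, h₁⟩, τ₁⟩ ⟨⟨⟨σ₂, x₂⟩, h₂⟩, τ₂⟩ h
    have hupd : Function.update σ₁ i₀ τ₁ = Function.update σ₂ i₀ τ₂ :=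
      congrArg (fun z ↦ z.1.1) h
    have hperm : σ₁ i₀ = σ₂ i₀ := congrArg (fun z ↦ z.2.1.1) h
    have hpt : prefixProd σ₁ w k x₁ = prefixProd σ₂ w k x₂ := congrArg (fun z ↦ z.2.1.2) h
    obtain rfl : τ₁ = τ₂ := Subtype.ext (by simpa using congrFun hupd i₀)
    obtain rfl : σ₁ = σ₂ := funext fun i ↦ by
      obtain rfl | hi := eq_or_ne i i₀
      · exact hperm
      · simpa only [Function.update_of_ne hi] using congrFun hupd i
    obtain rfl : x₁ = x₂ := (prefixProd σ₁ w k).injective hpt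
    rfl
  have hcard := Nat.card_le_card_of_injective F hF
  rw [Nat.card_prod, Nat.card_prod, card_tuples_pow_eq_one] at hcard
  exact hcard.trans (Nat.mul_le_mul_left _ (card_roots_pow_fixed_le (hp i₀) hw))

lemma card_stays_div_le (hp : ∀ i, p i ≠ 0) {k : ℕ} (hw : ¬ p (w k).1 ∣ (w k).2) :
    (Nat.card {y : (ι → Perm (Fin n)) × Fin n // (∀ i, y.1 i ^ p i = 1) ∧
        prefixProd y.1 w (k + 1) y.2 = prefixProd y.1 w k y.2} : ℝ) / (n * tupleCount p n) ≤
      ∑ e ∈ (p (w k).1).properDivisors,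
        (n.descFactorial e * rootCount (p (w k).1) (n - e) : ℝ) /
          (n * rootCount (p (w k).1) n) := by
  have hR : (0 : ℝ) < rootCount (p (w k).1) n := by exact_mod_cast rootCount_pos _ _
  have hT : (0 : ℝ) < tupleCount p n := by exact_mod_cast tupleCount_pos p n
  obtain rfl | hn := n.eq_zero_or_pos
  · simp
  have hn : (0 : ℝ) < n := by exact_mod_cast hn
  rw [← Finset.sum_div, div_le_div_iff₀ (by positivity) (by positivity)]
  have := card_stays_mul_le (n := n) hp hw
  rify at this
  nlinarith [mul_le_mul_of_nonneg_left this hn.le]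

lemma sum_card_isFirstCollision_div_le (hp : ∀ i, p i ≠ 0) {k : ℕ}
    (hw : ∀ l < k, (w l).1 ≠ (w (l + 1)).1) (hn : k + 1 < n) :
    ((∑ x, Nat.card {σ : ι → Perm (Fin n) //
        (∀ i, σ i ^ p i = 1) ∧ IsFirstCollision σ w x k} : ℕ) : ℝ) / (n * tupleCount p n) ≤
      ((k + 1) * ∑ i, p i : ℕ) / ((n - (k + 1) : ℕ) : ℝ) := by
  have hT : 0 < tupleCount p n := tupleCount_pos p n
  have hn' : 0 < n - (k + 1) := Nat.sub_pos_of_lt hn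
  rw [div_le_div_iff₀ (by exact_mod_cast Nat.mul_pos (by omega) hT) (by exact_mod_cast hn')]
  norm_cast
  calc _ = ∑ x, Nat.card {σ : ι → Perm (Fin n) //
        (∀ i, σ i ^ p i = 1) ∧ IsFirstCollision σ w x k} * (n - (k + 1)) := Finset.sum_mul ..
    _ ≤ ∑ _x : Fin n, tupleCount p n * ((k + 1) * ∑ i, p i) :=
        Finset.sum_le_sum fun x _ ↦ card_isFirstCollision_mul_le hp hw x
    _ = (k + 1) * (∑ i, p i) * (n * tupleCount p n) := by
        rw [Finset.sum_const, Finset.card_univ, Fintype.card_fin, smul_eq_mul]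
        ring

theorem tendsto_card_prefixProd_fixed_div (hp : ∀ i, p i ≠ 0) {r : ℕ} (hr : r ≠ 0)
    (hw : IsReducedWord p w r) :
    Tendsto (fun n : ℕ ↦ (Nat.card {y : (ι → Perm (Fin n)) × Fin n //
        (∀ i, y.1 i ^ p i = 1) ∧ prefixProd y.1 w r y.2 = y.2} : ℝ) / (n * tupleCount p n))
      atTop (𝓝 0) := by
  have hbound : Tendsto (fun n : ℕ ↦ ∑ k ∈ Finset.range r,
      (∑ e ∈ (p (w k).1).properDivisors,
        (n.descFactorial e * rootCount (p (w k).1) (n - e) : ℝ) / (n * rootCount (p (w k).1) n) +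
      ((k + 1) * ∑ i, p i : ℕ) / ((n - (k + 1) : ℕ) : ℝ))) atTop (𝓝 0) := by
    have hzero : (0 : ℝ) = ∑ k ∈ Finset.range r,
      (∑ _e ∈ (p (w k).1).properDivisors, (0 : ℝ) + 0) := by simp
    rw [hzero]
    refine tendsto_finsetSum _ fun k _ ↦ (tendsto_finsetSum _ fun e he ↦ ?_).add ?_
    · exact tendsto_descFactorial_mul_rootCount_div (Nat.mem_properDivisors.mp he).2
    · exact (tendsto_natCast_atTop_atTop.comp (tendsto_sub_atTop_nat _)).const_div_atTop _
  refine squeeze_zero' (.of_forall fun n ↦ by positivity) ?_ hbound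
  filter_upwards [eventually_gt_atTop r] with n hn
  calc _ ≤ ((∑ k ∈ Finset.range r, (_ + _) : ℕ) : ℝ) / (n * tupleCount p n) := by
        gcongr
        exact card_prefixProd_fixed_le hr hw
    _ ≤ _ := by
        rw [Nat.cast_sum, Finset.sum_div]
        refine Finset.sum_le_sum fun k hk ↦ ?_
        have hk : k < r := Finset.mem_range.mp hk
        rw [Nat.cast_add, add_div]
        exact add_le_add (card_stays_div_le hp (hw.not_dvd k hk))
          (sum_card_isFirstCollision_div_le hp (fun l hl ↦ hw.ne_succ l (by omega)) (by omega))

end FixedPoints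

section SemiregularPerms

open Equiv

variable {α : Type*} {z : Perm α}

/-- All cycles of `z` have the same length; equivalently, the group generated by `z` acts freely. -/
def IsSemiregular (z : Perm α) : Prop := ∀ x, Function.minimalPeriod z x = orderOf z

lemma isSemiregular_of_commute {ι : Type*} {σ : ι → Perm α} (hσ : IsTransitiveTuple σ)
    (hz : ∀ i, Commute (σ i) z) : IsSemiregular z := by
  intro x
  have hperiod : ∀ k, (z ^ k) x = x ↔ Function.minimalPeriod z x ∣ k := fun k ↦ by
    rw [← Function.isPeriodicPt_iff_minimalPeriod_dvd, Function.IsPeriodicPt, Function.IsFixedPt,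
      Perm.coe_pow]
  have hcomm : ∀ g ∈ Subgroup.closure (Set.range σ), Commute g z := fun g hg ↦
    ((Subgroup.closure_le (Subgroup.centralizer {z})).mpr (by
      rintro _ ⟨i, rfl⟩
      exact Subgroup.mem_centralizer_singleton_iff.mpr (hz i)) hg :
        g ∈ Subgroup.centralizer {z}) |> Subgroup.mem_centralizer_singleton_iff.mp
  refine Nat.dvd_antisymm ((hperiod _).mp (by rw [pow_orderOf_eq_one, Perm.one_apply]))
    (orderOf_dvd_of_pow_eq_one (Perm.ext fun y ↦ ?_))
  obtain ⟨⟨g, hg⟩, rfl⟩ := hσ.exists_smul_eq x y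
  have hgx := congrArg (· x) ((hcomm g hg).pow_right (Function.minimalPeriod z x)).eq
  calc (z ^ Function.minimalPeriod z x) (g x) = g ((z ^ Function.minimalPeriod z x) x) := hgx.symm
    _ = g x := by rw [(hperiod _).mpr dvd_rfl]

lemma IsSemiregular.card_sameCycle (hz : IsSemiregular z) (x : α) :
    Nat.card {y // z.SameCycle x y} = orderOf z := by
  have horbit : ∀ y, z.SameCycle x y ↔ y ∈ MulAction.orbit (Subgroup.zpowers z) x := fun y ↦
    ⟨fun ⟨k, hk⟩ ↦ ⟨⟨z ^ k, k, rfl⟩, hk⟩, fun ⟨⟨_, k, hk⟩, hy⟩ ↦ ⟨k, by simpa [← hk] using hy⟩⟩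
  rw [Nat.card_congr ((subtypeEquivRight horbit).trans (MulAction.orbitZPowersEquiv z x)),
    Nat.card_zmod]
  exact hz x

/-- The cycles of `z`, fixed points included. -/
abbrev Cycles (z : Perm α) : Type _ := Quotient (Perm.SameCycle.setoid z)

lemma IsSemiregular.card_fiber (hz : IsSemiregular z) (c : Cycles z) :
    Nat.card {y : α // (⟦y⟧ : Cycles z) = c} = orderOf z := by
  induction c using Quotient.inductionOn with
  | _ x =>
    rw [← hz.card_sameCycle x]
    exact Nat.card_congr (subtypeEquivRight fun y ↦ Quotient.eq.trans Perm.sameCycle_comm)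

lemma IsSemiregular.card_cycles_mul_orderOf [Finite α] (hz : IsSemiregular z) :
    Nat.card (Cycles z) * orderOf z = Nat.card α := by
  have := Fintype.ofFinite (Cycles z)
  rw [← Nat.card_congr (sigmaFiberEquiv fun y : α ↦ (⟦y⟧ : Cycles z)), Nat.card_sigma]
  simp only [hz.card_fiber, Finset.sum_const, Finset.card_univ, Nat.card_eq_fintype_card,
    smul_eq_mul]

lemma sameCycle_apply_apply_of_commute {τ : Perm α} (h : Commute τ z) {x y : α} :
    z.SameCycle (τ x) (τ y) ↔ z.SameCycle x y := by
  conv_lhs => rw [show z = τ * z * τ⁻¹ by rw [h.eq, mul_inv_cancel_right]]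
  simp [Perm.sameCycle_conj]

/-- The permutation of the cycles of `z` induced by a permutation commuting with `z`. -/
def cyclePerm {τ : Perm α} (h : Commute τ z) : Perm (Cycles z) :=
  Quotient.congr τ fun _ _ ↦ (sameCycle_apply_apply_of_commute h).symm

lemma cyclePerm_pow_apply {τ : Perm α} (h : Commute τ z) (k : ℕ) (x : α) :
    (cyclePerm h ^ k) ⟦x⟧ = ⟦(τ ^ k) x⟧ := by
  induction k with
  | zero => rfl
  | succ k ih => rw [pow_succ', pow_succ', Perm.mul_apply, ih]; rfl

lemma cyclePerm_pow_eq_one {τ : Perm α} {p : ℕ} (hτ : τ ^ p = z) (h : Commute τ z) :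
    cyclePerm h ^ p = 1 := by
  refine Perm.ext fun c ↦ ?_
  induction c using Quotient.inductionOn with
  | _ x =>
    rw [cyclePerm_pow_apply, hτ]
    exact Quotient.sound (Perm.sameCycle_apply_left.mpr (Perm.SameCycle.refl z x))

lemma eq_of_commute_of_eq_out {τ τ' : Perm α} (h : Commute τ z) (h' : Commute τ' z)
    (heq : ∀ c : Cycles z, τ c.out = τ' c.out) : τ = τ' := by
  refine Perm.ext fun x ↦ ?_
  set c : Cycles z := ⟦x⟧
  obtain ⟨k, hk⟩ : z.SameCycle c.out x := Quotient.exact c.out_eq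
  calc τ x = τ ((z ^ k) c.out) := by rw [hk]
    _ = (z ^ k) (τ c.out) := congrArg (· c.out) (h.zpow_right k).eq
    _ = (z ^ k) (τ' c.out) := by rw [heq]
    _ = τ' ((z ^ k) c.out) := congrArg (· c.out) (h'.zpow_right k).eq.symm
    _ = τ' x := by rw [hk]

/- A root of `z` is determined by the permutation it induces on the cycles of `z` and by the
image of one point of each cycle. -/
lemma IsSemiregular.card_roots_le [Finite α] (hz : IsSemiregular z) (p : ℕ) :
    Nat.card {τ : Perm α // τ ^ p = z} ≤
      rootCount p (Nat.card (Cycles z)) * orderOf z ^ Nat.card (Cycles z) := by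
  have := Fintype.ofFinite (Cycles z)
  have hcomm (τ : {τ : Perm α // τ ^ p = z}) : Commute τ.1 z := by
    simpa only [τ.2] using Commute.self_pow τ.1 p
  let F (τ : {τ : Perm α // τ ^ p = z}) :
      Σ π : {π : Perm (Cycles z) // π ^ p = 1}, ∀ c, {y : α // (⟦y⟧ : Cycles z) = π.1 c} :=
    ⟨⟨cyclePerm (hcomm τ), cyclePerm_pow_eq_one τ.2 (hcomm τ)⟩, fun c ↦ ⟨τ.1 c.out, by
      conv_rhs => rw [← c.out_eq]
      rfl⟩⟩
  have hF : Function.Injective F := fun τ τ' h ↦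
    Subtype.ext <| eq_of_commute_of_eq_out (hcomm τ) (hcomm τ') fun c ↦
      congrArg (fun y ↦ (y.2 c).1) h
  have := Fintype.ofFinite {π : Perm (Cycles z) // π ^ p = 1}
  calc _ ≤ _ := Nat.card_le_card_of_injective F hF
    _ = _ := by
      simp only [Nat.card_sigma, Nat.card_pi, hz.card_fiber, Finset.prod_const, Finset.sum_const,
        Finset.card_univ, ← Nat.card_eq_fintype_card, card_perm_pow_eq_one, smul_eq_mul]

lemma IsSemiregular.cycleType_eq [Fintype α] [DecidableEq α] (hz : IsSemiregular z) (hz1 : z ≠ 1) :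
    z.cycleType = Multiset.replicate (Nat.card (Cycles z)) (orderOf z) := by
  have hmoved (x : α) : z x ≠ x := fun hx ↦ hz1 <| orderOf_eq_one_iff.mp <|
    (hz x).symm.trans (Function.minimalPeriod_eq_one_iff_isFixedPt.mpr hx)
  have hparts : ∀ a ∈ z.cycleType, a = orderOf z := by
    intro a ha
    rw [Perm.cycleType_def, Multiset.mem_map] at ha
    obtain ⟨c, hc, rfl⟩ := ha
    obtain ⟨x, hx⟩ := (Perm.mem_cycleFactorsFinset_iff.mp hc).1.nonempty_support
    rw [Perm.cycle_is_cycleOf hx hc, ← hz.card_sameCycle x, Nat.card_eq_fintype_card,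
      Fintype.card_subtype]
    exact congrArg Finset.card (Finset.ext fun y ↦ by
      rw [Perm.mem_support_cycleOf_iff' (hmoved x), Finset.mem_filter_univ])
  have hrep := Multiset.eq_replicate_of_mem hparts
  have hsupp : z.support = Finset.univ := by
    ext x
    simp [hmoved x]
  have hsum := z.sum_cycleType
  rw [hrep, Multiset.sum_replicate, smul_eq_mul, hsupp, Finset.card_univ,
    ← Nat.card_eq_fintype_card, ← hz.card_cycles_mul_orderOf] at hsum
  rwa [Nat.eq_of_mul_eq_mul_right (orderOf_pos z) hsum] at hrep

lemma card_semiregular_mul_factorial_le {d q n : ℕ} (hd : 2 ≤ d) (hn : q * d = n) :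
    Nat.card {z : Perm (Fin n) // IsSemiregular z ∧ orderOf z = d} * q.factorial ≤
      n.factorial := by
  classical
  have htype : ∀ z : Perm (Fin n), IsSemiregular z → orderOf z = d →
      z.cycleType = Multiset.replicate q d := by
    intro z hz hzd
    have hcard : Nat.card (Cycles z) * d = q * d :=
      (hzd ▸ hz.card_cycles_mul_orderOf).trans ((Nat.card_fin n).trans hn.symm)
    rw [hz.cycleType_eq (fun h ↦ by rw [h, orderOf_one] at hzd; omega), hzd,
      Nat.eq_of_mul_eq_mul_right (by omega) hcard]
  have hcount := Perm.card_of_cycleType_mul_eq (Fin n) (Multiset.replicate q d)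
  have hfact : (∏ k ∈ (Multiset.replicate q d).toFinset,
      ((Multiset.replicate q d).count k).factorial) = q.factorial := by
    obtain rfl | hq := eq_or_ne q 0
    · rfl
    · simp [Multiset.toFinset_replicate, hq]
  rw [hfact, Multiset.sum_replicate, smul_eq_mul, Multiset.prod_replicate, Fintype.card_fin, hn,
    Nat.sub_self, Nat.factorial_zero, one_mul] at hcount
  calc _ ≤ ({z | z.cycleType = Multiset.replicate q d} : Finset (Perm (Fin n))).card *
        (d ^ q * q.factorial) := by
        rw [Nat.card_eq_fintype_card, Fintype.card_subtype]
        exact Nat.mul_le_mul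
          (Finset.card_le_card (Finset.monotone_filter_right _ fun z _ hz ↦ htype z hz.1 hz.2))
          (Nat.le_mul_of_pos_left _ (by positivity))
    _ ≤ n.factorial := hcount.le.trans (by split_ifs <;> simp)

end SemiregularPerms

section CentralTuples

open Equiv

variable {ι : Type*} [Fintype ι] {p : ι → ℕ}

lemma IsSemiregular.card_tuples_pow_eq_le {n : ℕ} {z : Perm (Fin n)} (hz : IsSemiregular z)
    {d : ℕ} (hd : orderOf z = d) (p : ι → ℕ) :
    Nat.card {σ : ι → Perm (Fin n) // ∀ i, σ i ^ p i = z} ≤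
      tupleCount p (n / d) * d ^ (n / d * Fintype.card ι) := by
  have hq : n / d = Nat.card (Cycles z) := hd ▸ Nat.div_eq_of_eq_mul_left (orderOf_pos z)
    ((Nat.card_fin n).symm.trans hz.card_cycles_mul_orderOf.symm)
  calc _ = ∏ i, Nat.card {τ : Perm (Fin n) // τ ^ p i = z} := by
        rw [Nat.card_congr (subtypePiEquivPi (p := fun i (τ : Perm (Fin n)) ↦ τ ^ p i = z)),
          Nat.card_pi]
    _ ≤ ∏ i, (rootCount (p i) (n / d) * d ^ (n / d)) := by
        rw [hq, ← hd]
        exact Finset.prod_le_prod' fun i _ ↦ hz.card_roots_le (p i)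
    _ = _ := by
        rw [Finset.prod_mul_distrib, Finset.prod_const, Finset.card_univ, ← pow_mul, tupleCount]

lemma card_transitive_central_le [Nonempty ι] (p : ι → ℕ) (n : ℕ) :
    Nat.card {σ : ι → Perm (Fin n) // (∀ i j, σ i ^ p i = σ j ^ p j) ∧ IsTransitiveTuple σ ∧
      ¬ ∀ i, σ i ^ p i = 1} ≤
    ∑ d ∈ n.divisors with 2 ≤ d,
      Nat.card {z : Perm (Fin n) // IsSemiregular z ∧ orderOf z = d} *
        (tupleCount p (n / d) * d ^ (n / d * Fintype.card ι)) := by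
  classical
  let Z (d : ℕ) : Finset (Perm (Fin n)) := {z | IsSemiregular z ∧ orderOf z = d}
  let R (z : Perm (Fin n)) : Finset (ι → Perm (Fin n)) := {σ | ∀ i, σ i ^ p i = z}
  have hcover : ({σ | (∀ i j, σ i ^ p i = σ j ^ p j) ∧ IsTransitiveTuple σ ∧
      ¬ ∀ i, σ i ^ p i = 1} : Finset (ι → Perm (Fin n))) ⊆
      {d ∈ n.divisors | 2 ≤ d}.biUnion fun d ↦ (Z d).biUnion R := by
    intro σ hσ
    obtain ⟨hcentral, htrans, hne⟩ := (Finset.mem_filter.mp hσ).2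
    obtain ⟨z, hz⟩ : ∃ z, ∀ i, σ i ^ p i = z := ⟨_, fun i ↦ hcentral i (Classical.arbitrary ι)⟩
    have hz1 : z ≠ 1 := fun h ↦ hne fun i ↦ (hz i).trans h
    have hsemi : IsSemiregular z :=
      isSemiregular_of_commute htrans fun i ↦ hz i ▸ Commute.self_pow (σ i) (p i)
    have hn : n ≠ 0 := by
      rintro rfl
      exact hz1 (Subsingleton.elim _ _)
    have hdvd : orderOf z ∣ n :=
      ⟨_, by rw [mul_comm, hsemi.card_cycles_mul_orderOf, Nat.card_fin]⟩
    have htwo : 2 ≤ orderOf z :=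
      (Nat.two_le_iff _).mpr ⟨(orderOf_pos z).ne', mt orderOf_eq_one_iff.mp hz1⟩
    simp only [Finset.mem_biUnion, Finset.mem_filter, Nat.mem_divisors, Z, R, Finset.mem_univ,
      true_and]
    exact ⟨orderOf z, ⟨⟨hdvd, hn⟩, htwo⟩, z, ⟨hsemi, rfl⟩, hz⟩
  rw [Nat.card_eq_fintype_card, Fintype.card_subtype]
  refine (Finset.card_le_card hcover).trans (Finset.card_biUnion_le.trans
    (Finset.sum_le_sum fun d _ ↦ ?_))
  rw [Nat.card_eq_fintype_card, Fintype.card_subtype]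
  refine Finset.card_biUnion_le_card_mul _ _ _ fun z hz ↦ ?_
  obtain ⟨hsemi, hzd⟩ := (Finset.mem_filter.mp hz).2
  have := hsemi.card_tuples_pow_eq_le hzd p
  rwa [Nat.card_eq_fintype_card, Fintype.card_subtype] at this

lemma tupleCount_eq_factorial_rpow_mul (p : ι → ℕ) (n : ℕ) :
    (tupleCount p n : ℝ) = (n.factorial : ℝ) ^ (1 - eulerChar p) * ∏ i, rootNorm (p i) n := by
  have hexp : 1 - eulerChar p = ∑ i, (1 - 1 / p i : ℝ) := by
    rw [eulerChar, Finset.sum_sub_distrib, Finset.sum_const, Finset.card_univ, nsmul_one]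
    ring
  rw [hexp, Real.rpow_sum_of_pos (by positivity), ← Finset.prod_mul_distrib, tupleCount,
    Nat.cast_prod]
  exact Finset.prod_congr rfl fun i _ ↦ by rw [rootCount_eq_rootNorm_mul, mul_comm]

lemma prod_rootNorm_le (hp : ∀ i, p i ≠ 0) (q n : ℕ) :
    ∏ i, rootNorm (p i) q ≤ (∏ i, (1 + p i : ℝ)) ^ (q + n) * ∏ i, rootNorm (p i) n := by
  rw [← Finset.prod_pow, ← Finset.prod_mul_distrib]
  refine Finset.prod_le_prod (fun i _ ↦ (rootNorm_pos _ _).le) fun i _ ↦ ?_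
  calc rootNorm (p i) q ≤ (1 + p i : ℝ) ^ q * 1 := by
        rw [mul_one]
        exact (rootNorm_le_growthBound (hp i) q).trans (growthBound_le_pow _ q)
    _ ≤ (1 + p i : ℝ) ^ q * ((1 + p i : ℝ) ^ n * rootNorm (p i) n) := by
        gcongr
        exact (one_le_growthBound_mul_rootNorm (hp i) n).trans
          (mul_le_mul_of_nonneg_right (growthBound_le_pow _ n) (rootNorm_pos _ _).le)
    _ = _ := by rw [pow_add, mul_assoc]

lemma factorial_div_mul_tupleCount_le (hp : ∀ i, p i ≠ 0) (hχ : eulerChar p ≤ 0) {q n : ℕ}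
    (hqn : 2 * q ≤ n) :
    (n.factorial / q.factorial : ℝ) * tupleCount p q ≤
      ((n / 2).factorial : ℝ) ^ eulerChar p * (∏ i, (1 + p i : ℝ)) ^ (2 * n) * tupleCount p n := by
  set D : ℝ := ∏ i, (1 + p i : ℝ)
  have hD : 1 ≤ D := Finset.one_le_prod fun i ↦ by simp
  have hq : (0 : ℝ) < q.factorial := by exact_mod_cast q.factorial_pos
  have hn : (0 : ℝ) < n.factorial := by exact_mod_cast n.factorial_pos
  have hfac : ((n / 2).factorial : ℝ) ≤ n.factorial / q.factorial := by
    have hchoose : (n - q).factorial * q.factorial ≤ n.factorial := by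
      rw [mul_comm]
      exact Nat.le_of_dvd n.factorial_pos
        (Nat.factorial_mul_factorial_dvd_factorial (by omega : q ≤ n))
    rw [le_div_iff₀ hq]
    exact_mod_cast (Nat.mul_le_mul_right _
      (Nat.factorial_le (by omega : n / 2 ≤ n - q))).trans hchoose
  have hratio : (n.factorial / q.factorial : ℝ) * (q.factorial : ℝ) ^ (1 - eulerChar p) =
      (n.factorial / q.factorial : ℝ) ^ eulerChar p * (n.factorial : ℝ) ^ (1 - eulerChar p) := by
    rw [Real.div_rpow hn.le hq.le, Real.rpow_sub hq, Real.rpow_sub hn, Real.rpow_one, Real.rpow_one]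
    field_simp
  calc (n.factorial / q.factorial : ℝ) * tupleCount p q
      = (n.factorial / q.factorial : ℝ) ^ eulerChar p * (n.factorial : ℝ) ^ (1 - eulerChar p) *
          ∏ i, rootNorm (p i) q := by
        rw [tupleCount_eq_factorial_rpow_mul, ← mul_assoc, hratio]
    _ ≤ ((n / 2).factorial : ℝ) ^ eulerChar p * (n.factorial : ℝ) ^ (1 - eulerChar p) *
          (D ^ (2 * n) * ∏ i, rootNorm (p i) n) := by
        have hnorm : ∏ i, rootNorm (p i) q ≤ D ^ (2 * n) * ∏ i, rootNorm (p i) n :=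
          (prod_rootNorm_le hp q n).trans <| mul_le_mul_of_nonneg_right
            (pow_le_pow_right₀ hD (by omega)) (Finset.prod_nonneg fun i _ ↦ (rootNorm_pos _ _).le)
        have hpow := Real.rpow_le_rpow_of_nonpos (by positivity) hfac hχ
        gcongr
        exact Finset.prod_nonneg fun i _ ↦ (rootNorm_pos _ _).le
    _ = _ := by rw [tupleCount_eq_factorial_rpow_mul p n]; ring

lemma card_semiregular_mul_tupleCount_le (hp : ∀ i, p i ≠ 0) (hχ : eulerChar p ≤ 0) {d n : ℕ}
    (hd : 2 ≤ d) (hdn : d ∣ n) :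
    (Nat.card {z : Perm (Fin n) // IsSemiregular z ∧ orderOf z = d} *
        (tupleCount p (n / d) * d ^ (n / d * Fintype.card ι)) : ℝ) ≤
      ((∏ i, (1 + p i : ℝ)) ^ 2 * 2 ^ Fintype.card ι) ^ n * ((n / 2).factorial : ℝ) ^ eulerChar p *
        tupleCount p n := by
  set q := n / d
  have hqd : q * d = n := Nat.div_mul_cancel hdn
  have hdpow : (d : ℝ) ^ q ≤ 2 ^ n := by
    rw [← hqd, mul_comm q d, pow_mul]
    exact_mod_cast Nat.pow_le_pow_left d.lt_two_pow_self.le q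
  have hcard : (Nat.card {z : Perm (Fin n) // IsSemiregular z ∧ orderOf z = d} : ℝ) ≤
      n.factorial / q.factorial := by
    rw [le_div_iff₀ (by positivity)]
    exact_mod_cast card_semiregular_mul_factorial_le hd hqd
  calc _ ≤ (n.factorial / q.factorial : ℝ) * (tupleCount p q * ((2 : ℝ) ^ n) ^ Fintype.card ι) := by
        rw [pow_mul]
        gcongr
    _ = (n.factorial / q.factorial : ℝ) * tupleCount p q * ((2 : ℝ) ^ n) ^ Fintype.card ι := by ring
    _ ≤ ((n / 2).factorial : ℝ) ^ eulerChar p * (∏ i, (1 + p i : ℝ)) ^ (2 * n) * tupleCount p n *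
          ((2 : ℝ) ^ n) ^ Fintype.card ι := by
        exact mul_le_mul_of_nonneg_right
          (factorial_div_mul_tupleCount_le hp hχ (by nlinarith)) (by positivity)
    _ = _ := by rw [mul_pow, ← pow_mul, ← pow_mul, ← pow_mul, mul_comm n (Fintype.card ι)]; ring

lemma tendsto_pow_mul_half_factorial_rpow {K χ : ℝ} (hK : 1 ≤ K) (hχ : χ < 0) :
    Tendsto (fun n : ℕ ↦ K ^ n * ((n / 2).factorial : ℝ) ^ χ) atTop (𝓝 0) := by
  have hK0 : 0 < K := one_pos.trans_le hK
  have hpow : Tendsto (fun k : ℕ ↦ ((K ^ (2 / -χ)) ^ k / (k.factorial : ℝ)) ^ (-χ))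
      atTop (𝓝 0) := by
    simpa only [Real.zero_rpow (neg_pos.mpr hχ).ne'] using
      (FloorSemiring.tendsto_pow_div_factorial_atTop (K ^ (2 / -χ))).rpow_const
        (p := -χ) (.inr (neg_pos.mpr hχ).le)
  have hhalf := (hpow.comp (Nat.tendsto_div_const_atTop two_ne_zero)).const_mul K
  rw [mul_zero] at hhalf
  refine squeeze_zero (fun n ↦ by positivity) (fun n ↦ ?_) hhalf
  have hbase : ((K ^ (2 / -χ)) ^ (n / 2) : ℝ) ^ (-χ) = K ^ (2 * (n / 2)) := by
    rw [← Real.rpow_natCast, ← Real.rpow_mul hK0.le, ← Real.rpow_mul hK0.le, ← Real.rpow_natCast]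
    congr 1
    push_cast
    field_simp [hχ.ne]
  rw [Function.comp_apply, Real.div_rpow (by positivity) (by positivity), hbase,
    Real.rpow_neg (by positivity), div_inv_eq_mul, ← mul_assoc, ← pow_succ']
  gcongr
  omega

theorem tendsto_card_transitive_central_div (hp : ∀ i, p i ≠ 0) (hχ : eulerChar p < 0) :
    Tendsto (fun n : ℕ ↦ (Nat.card {σ : ι → Perm (Fin n) // (∀ i j, σ i ^ p i = σ j ^ p j) ∧
      IsTransitiveTuple σ ∧ ¬ ∀ i, σ i ^ p i = 1} : ℝ) / tupleCount p n) atTop (𝓝 0) := by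
  have := nonempty_of_eulerChar_neg hχ
  set K : ℝ := (∏ i, (1 + p i : ℝ)) ^ 2 * 2 ^ Fintype.card ι
  have hK : 1 ≤ K := one_le_mul_of_one_le_of_one_le
    (one_le_pow₀ (Finset.one_le_prod fun i ↦ by simp)) (one_le_pow₀ one_le_two)
  refine squeeze_zero (fun n ↦ by positivity) (fun n ↦ ?_)
    (tendsto_pow_mul_half_factorial_rpow (K := 2 * K) (by linarith) hχ)
  have hT : (0 : ℝ) < tupleCount p n := by exact_mod_cast tupleCount_pos p n
  have hdivisors : ({d ∈ n.divisors | 2 ≤ d}.card : ℝ) ≤ 2 ^ n := by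
    exact_mod_cast (Finset.card_filter_le _ _).trans
      ((Nat.card_divisors_le_self n).trans n.lt_two_pow_self.le)
  rw [div_le_iff₀ hT]
  calc _ ≤ ((∑ d ∈ n.divisors with 2 ≤ d, (_ * (_ * _)) : ℕ) : ℝ) :=
        Nat.cast_le.mpr (card_transitive_central_le p n)
    _ ≤ ∑ d ∈ n.divisors with 2 ≤ d,
          K ^ n * ((n / 2).factorial : ℝ) ^ eulerChar p * tupleCount p n := by
        push_cast
        refine Finset.sum_le_sum fun d hd ↦ ?_
        obtain ⟨hdn, hd2⟩ := Finset.mem_filter.mp hd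
        exact card_semiregular_mul_tupleCount_le hp hχ.le hd2 (Nat.dvd_of_mem_divisors hdn)
    _ ≤ 2 ^ n * (K ^ n * ((n / 2).factorial : ℝ) ^ eulerChar p * tupleCount p n) := by
        rw [Finset.sum_const, nsmul_eq_mul]
        gcongr
    _ = _ := by rw [mul_pow]; ring

end CentralTuples

section CosetActions

open Equiv

variable {G α : Type*} [Group G]

lemma isPretransitive_range_iff {ρ : G →* Perm α} :
    MulAction.IsPretransitive ρ.range α ↔ ∀ x y, ∃ g, ρ g x = y := by
  refine ⟨fun h x y ↦ ?_, fun h ↦ ⟨fun x y ↦ ?_⟩⟩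
  · obtain ⟨⟨_, g, rfl⟩, hg⟩ := h.exists_smul_eq x y
    exact ⟨g, hg⟩
  · obtain ⟨g, hg⟩ := h x y
    exact ⟨⟨ρ g, g, rfl⟩, hg⟩

/-- The left action of `G` on `G ⧸ H`, carried over to `α` by a labelling `e` of the cosets. -/
def cosetPermHom {H : Subgroup G} (e : G ⧸ H ≃ α) : G →* Perm α :=
  e.permCongrHom.toMonoidHom.comp (MulAction.toPermHom G (G ⧸ H))

lemma cosetPermHom_apply_apply {H : Subgroup G} (e : G ⧸ H ≃ α) (g : G) (c : G ⧸ H) :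
    cosetPermHom e g (e c) = e (g • c) :=
  congrArg (fun c ↦ e (g • c)) (e.symm_apply_apply c)

lemma cosetPermHom_apply_apply_one {H : Subgroup G} (e : G ⧸ H ≃ α) (g : G) :
    cosetPermHom e g (e ((1 : G) : G ⧸ H)) = e (g : G ⧸ H) := by
  rw [cosetPermHom_apply_apply, MulAction.Quotient.smul_coe, smul_eq_mul, mul_one]

lemma isPretransitive_range_cosetPermHom {H : Subgroup G} (e : G ⧸ H ≃ α) :
    MulAction.IsPretransitive (cosetPermHom e).range α := by
  refine isPretransitive_range_iff.mpr fun x y ↦ ?_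
  obtain ⟨g, hg⟩ := MulAction.exists_smul_eq G (e.symm x) (e.symm y)
  exact ⟨g, by rw [← e.apply_symm_apply x, cosetPermHom_apply_apply, hg, e.apply_symm_apply]⟩

lemma fixedCosetCount_eq_card_fixed {H : Subgroup G} (e : G ⧸ H ≃ α) (g : G) :
    fixedCosetCount g H = Nat.card {x // cosetPermHom e g x = x} :=
  Nat.card_congr <| e.subtypeEquiv fun c ↦ by
    rw [cosetPermHom_apply_apply, e.apply_eq_iff_eq]

lemma sigma_eq_of_cosetPermHom_eq {H H' : Subgroup G} {e : G ⧸ H ≃ α} {e' : G ⧸ H' ≃ α}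
    (hρ : cosetPermHom e = cosetPermHom e')
    (hbase : e ((1 : G) : G ⧸ H) = e' ((1 : G) : G ⧸ H')) :
    (⟨H, e⟩ : Σ H : Subgroup G, G ⧸ H ≃ α) = ⟨H', e'⟩ := by
  have hcoe (g : G) : e (g : G ⧸ H) = e' (g : G ⧸ H') := by
    rw [← cosetPermHom_apply_apply_one e g, ← cosetPermHom_apply_apply_one e' g, hρ, hbase]
  obtain rfl : H = H' := Subgroup.ext fun g ↦ by
    rw [← inv_mem_iff, ← inv_mem_iff (H := H'), ← mul_one g⁻¹, ← QuotientGroup.eq,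
      ← QuotientGroup.eq, ← e.apply_eq_iff_eq, ← e'.apply_eq_iff_eq, hcoe, hcoe]
  obtain rfl : e = e' := Equiv.ext fun c ↦ QuotientGroup.induction_on c hcoe
  rfl

/- The witness is the stabilizer of `o`, with cosets labelled by the orbit map `g ↦ ρ g o`. -/
lemma exists_cosetPermHom_eq {ρ : G →* Perm α} (hρ : MulAction.IsPretransitive ρ.range α) (o : α) :
    ∃ (H : Subgroup G) (e : G ⧸ H ≃ α), cosetPermHom e = ρ ∧ e ((1 : G) : G ⧸ H) = o := by
  let _ : MulAction G α := MulAction.compHom α ρ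
  have hbij : Function.Bijective (MulAction.ofQuotientStabilizer G o) :=
    ⟨MulAction.injective_ofQuotientStabilizer G o, fun x ↦
      (isPretransitive_range_iff.mp hρ o x).imp' QuotientGroup.mk fun _ h ↦ h⟩
  refine ⟨MulAction.stabilizer G o, .ofBijective _ hbij, ?_, one_smul G o⟩
  ext g x
  obtain ⟨c, rfl⟩ := hbij.2 x
  exact (cosetPermHom_apply_apply (.ofBijective _ hbij) g c).trans
    (MulAction.ofQuotientStabilizer_smul G o g c)

/-- A subgroup `H` with a labelling of `G ⧸ H` by `α` is the same as a transitive action of `G` on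
`α` with a base point, namely the label of the trivial coset. -/
noncomputable def labelledSubgroupEquiv :
    (Σ H : {H : Subgroup G // H.index = Nat.card α}, G ⧸ H.1 ≃ α) ≃
      {ρ : G →* Perm α // MulAction.IsPretransitive ρ.range α} × α :=
  .ofBijective (fun s ↦ (⟨cosetPermHom s.2, isPretransitive_range_cosetPermHom s.2⟩,
    s.2 ((1 : G) : G ⧸ s.1.1))) <| by
    constructor
    · rintro ⟨⟨H, hH⟩, e⟩ ⟨⟨H', hH'⟩, e'⟩ h
      cases sigma_eq_of_cosetPermHom_eq (congrArg (·.1.1) h) (congrArg (·.2) h)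
      rfl
    · rintro ⟨⟨ρ, hρ⟩, o⟩
      obtain ⟨H, e, rfl, rfl⟩ := exists_cosetPermHom_eq hρ o
      exact ⟨⟨⟨H, Nat.card_congr e⟩, e⟩, rfl⟩

variable [Finite α] [Nonempty α] [Finite (G →* Perm α)]

lemma finite_subgroup_index_eq_card : Finite {H : Subgroup G // H.index = Nat.card α} := by
  have hlabel (H : {H : Subgroup G // H.index = Nat.card α}) : Nonempty (G ⧸ H.1 ≃ α) :=
    have : Finite (G ⧸ H.1) := Nat.finite_of_card_ne_zero (H.2.trans_ne Nat.card_pos.ne')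
    Finite.card_eq.mp H.2
  exact .of_injective (fun H ↦ labelledSubgroupEquiv ⟨H, (hlabel H).some⟩)
    fun _ _ h ↦ congrArg Sigma.fst (labelledSubgroupEquiv.injective h)

lemma factorial_mul_tsum_subgroup (f : Subgroup G → ℝ) (F : (G →* Perm α) → ℝ)
    (hF : ∀ H, ∀ e : G ⧸ H ≃ α, F (cosetPermHom e) = f H) :
    (Nat.card α).factorial * ∑' H : {H : Subgroup G // H.index = Nat.card α}, f H.1 =
      Nat.card α * ∑' ρ : {ρ : G →* Perm α // MulAction.IsPretransitive ρ.range α}, F ρ.1 := by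
  classical
  have := finite_subgroup_index_eq_card (G := G) (α := α)
  have := Fintype.ofFinite {H : Subgroup G // H.index = Nat.card α}
  have := Fintype.ofFinite {ρ : G →* Perm α // MulAction.IsPretransitive ρ.range α}
  have := Fintype.ofFinite α
  have (H : {H : Subgroup G // H.index = Nat.card α}) : Finite (G ⧸ H.1) :=
    Nat.finite_of_card_ne_zero (H.2.trans_ne Nat.card_pos.ne')
  have (H : {H : Subgroup G // H.index = Nat.card α}) := Fintype.ofFinite (G ⧸ H.1)
  have hlabels (H : {H : Subgroup G // H.index = Nat.card α}) :
      Fintype.card (G ⧸ H.1 ≃ α) = (Nat.card α).factorial := by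
    rw [Fintype.card_equiv (Finite.card_eq.mp H.2).some, ← Nat.card_eq_fintype_card]
    exact congrArg _ H.2
  have hsum := Fintype.sum_equiv (labelledSubgroupEquiv (G := G) (α := α)) (fun s ↦ f s.1.1)
    (fun y ↦ F y.1.1) fun s ↦ (hF s.1.1 s.2).symm
  simpa only [Fintype.sum_sigma, Fintype.sum_prod_type, Finset.sum_const, Finset.card_univ,
    hlabels, nsmul_eq_mul, ← Finset.mul_sum, ← Nat.card_eq_fintype_card, tsum_fintype] using hsum

lemma subgroupExp_eq_tsum_div (f : Subgroup G → ℝ) (F : (G →* Perm α) → ℝ)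
    (hF : ∀ H, ∀ e : G ⧸ H ≃ α, F (cosetPermHom e) = f H) :
    subgroupExp G (Nat.card α) f =
      (∑' ρ : {ρ : G →* Perm α // MulAction.IsPretransitive ρ.range α}, F ρ.1) /
        Nat.card {ρ : G →* Perm α // MulAction.IsPretransitive ρ.range α} := by
  have := finite_subgroup_index_eq_card (G := G) (α := α)
  have hnum := factorial_mul_tsum_subgroup f F hF
  have hden := factorial_mul_tsum_subgroup (G := G) (α := α) (fun _ ↦ 1) (fun _ ↦ 1) fun _ _ ↦ rfl
  simp only [tsum_const, nsmul_one] at hden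
  have hfac : ((Nat.card α).factorial : ℝ) ≠ 0 := by positivity
  have hcard : (Nat.card α : ℝ) ≠ 0 := by exact_mod_cast Nat.card_pos.ne'
  rw [subgroupExp, ← mul_div_mul_left _ _ hfac, hnum, hden, mul_div_mul_left _ _ hcard]

theorem subgroupExp_fixedCosetCount_eq (g : G) :
    subgroupExp G (Nat.card α) (fun H ↦ fixedCosetCount g H) =
      (Nat.card {y : (G →* Perm α) × α //
        MulAction.IsPretransitive y.1.range α ∧ y.1 g y.2 = y.2} : ℝ) /
          Nat.card {ρ : G →* Perm α // MulAction.IsPretransitive ρ.range α} := by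
  have := Fintype.ofFinite {ρ : G →* Perm α // MulAction.IsPretransitive ρ.range α}
  have hpairs : Nat.card {y : (G →* Perm α) × α //
      MulAction.IsPretransitive y.1.range α ∧ y.1 g y.2 = y.2} =
      ∑ ρ : {ρ : G →* Perm α // MulAction.IsPretransitive ρ.range α},
        Nat.card {x : α // ρ.1 g x = x} := by
    rw [← Nat.card_sigma]
    exact Nat.card_congr
      ⟨fun y ↦ ⟨⟨y.1.1, y.2.1⟩, y.1.2, y.2.2⟩, fun s ↦ ⟨(s.1.1, s.2.1), s.1.2, s.2.2⟩,
        fun _ ↦ rfl, fun _ ↦ rfl⟩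
  rw [subgroupExp_eq_tsum_div _ (fun ρ ↦ Nat.card {x : α // ρ g x = x})
    fun H e ↦ congrArg Nat.cast (fixedCosetCount_eq_card_fixed e g).symm, hpairs, tsum_fintype,
    Nat.cast_sum]

end CosetActions

section TorusKnotGroups

open Equiv

variable {m : ℕ} {p : Fin m → ℕ}

lemma torusKnotGroup_of_pow_eq (i j : Fin m) :
    (PresentedGroup.of i : TorusKnotGroup m p) ^ p i = PresentedGroup.of j ^ p j := by
  have hmk := PresentedGroup.mk_eq_mk_of_mul_inv_mem (rels := torusRels m p) ⟨i, j, rfl⟩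
  rwa [map_pow, map_pow] at hmk

/-- A homomorphism out of `TorusKnotGroup m p`, encoded by the images of the generators. -/
def torusHomEquiv {M : Type*} [Group M] :
    (TorusKnotGroup m p →* M) ≃ {σ : Fin m → M // ∀ i j, σ i ^ p i = σ j ^ p j} where
  toFun ρ := ⟨fun i ↦ ρ (.of i), fun i j ↦ by
    simp only [← map_pow, torusKnotGroup_of_pow_eq i j]⟩
  invFun σ := PresentedGroup.toGroup (f := σ.1) <| by
    rintro _ ⟨i, j, rfl⟩
    simp only [map_mul, map_inv, map_pow, FreeGroup.lift_apply_of, σ.2 i j, mul_inv_cancel]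
  left_inv ρ := PresentedGroup.ext fun i ↦ PresentedGroup.toGroup.of _
  right_inv σ := Subtype.ext <| funext fun i ↦ PresentedGroup.toGroup.of _

instance {M : Type*} [Group M] [Finite M] : Finite (TorusKnotGroup m p →* M) :=
  .of_equiv _ torusHomEquiv.symm

lemma card_torusHom {M : Type*} [Group M] (P : (Fin m → M) → Prop) :
    Nat.card {ρ : TorusKnotGroup m p →* M // P fun i ↦ ρ (.of i)} =
      Nat.card {σ : Fin m → M // (∀ i j, σ i ^ p i = σ j ^ p j) ∧ P σ} :=
  Nat.card_congr <| (torusHomEquiv.subtypeEquiv (q := fun σ ↦ P σ.1) fun _ ↦ Iff.rfl).trans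
    (subtypeSubtypeEquivSubtypeInter _ P)

lemma isPretransitive_range_iff_isTransitiveTuple {ι α : Type*} {rels : Set (FreeGroup ι)}
    {ρ : PresentedGroup rels →* Perm α} :
    MulAction.IsPretransitive ρ.range α ↔ IsTransitiveTuple fun i ↦ ρ (.of i) := by
  have hrange : ρ.range = Subgroup.closure (Set.range fun i ↦ ρ (.of i)) := by
    rw [MonoidHom.range_eq_map, ← PresentedGroup.closure_range_of, MonoidHom.map_closure,
      ← Set.range_comp]
    rfl
  rw [hrange]

lemma phiMap_of (i : Fin m) : PhiMap m p (.of i) = .of i := PresentedGroup.toGroup.of _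

lemma ker_phiMap_le_ker_iff {M : Type*} [Group M] {ρ : TorusKnotGroup m p →* M} :
    (PhiMap m p).ker ≤ ρ.ker ↔ ∀ i, ρ (.of i) ^ p i = 1 := by
  refine ⟨fun h i ↦ ?_, fun h ↦ ?_⟩
  · rw [← map_pow]
    exact h (by rw [MonoidHom.mem_ker, map_pow, phiMap_of, cyclicFreeProduct_gen_pow])
  · have hrels : ∀ r ∈ cyclicRels m p, FreeGroup.lift (fun i ↦ ρ (.of i)) r = 1 := by
      rintro _ ⟨i, rfl⟩
      rw [map_pow, FreeGroup.lift_apply_of, h]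
    have hfactor : ρ = (PresentedGroup.toGroup hrels).comp (PhiMap m p) :=
      PresentedGroup.ext fun i ↦ by
        rw [MonoidHom.comp_apply, phiMap_of, PresentedGroup.toGroup.of]
    rw [hfactor, ← MonoidHom.comap_ker]
    exact Subgroup.ker_le_comap _ _

lemma exists_isReducedWord_of_notMem_ker [Nonempty (Fin m)] (hp : ∀ i, p i ≠ 0)
    {g : TorusKnotGroup m p} (hg : g ∉ (PhiMap m p).ker) :
    ∃ w r, r ≠ 0 ∧ IsReducedWord p w r ∧ ∀ {M : Type} [Group M] (ρ : TorusKnotGroup m p →* M),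
      (PhiMap m p).ker ≤ ρ.ker → ρ g = prefixProd (fun i ↦ ρ (.of i)) w r := by
  obtain ⟨w, r, hw, hΦ⟩ := exists_isReducedWord hp (cyclicFreeProduct_gen_pow m p)
    (PresentedGroup.closure_range_of _) (PhiMap m p g)
  refine ⟨w, r, ?_, hw, fun ρ hρ ↦ ?_⟩
  · rintro rfl
    exact hg (MonoidHom.mem_ker.mpr hΦ.symm)
  · rw [← map_prefixProd ρ, ρ.eq_iff]
    refine hρ ((PhiMap m p).eq_iff.mp ?_)
    rw [map_prefixProd, ← hΦ]
    simp only [phiMap_of]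

lemma tendsto_card_factoring_fixed_div [Nonempty (Fin m)] (hp : ∀ i, p i ≠ 0)
    {g : TorusKnotGroup m p} (hg : g ∉ (PhiMap m p).ker) :
    Tendsto (fun n : ℕ ↦ (Nat.card {y : (TorusKnotGroup m p →* Perm (Fin n)) × Fin n //
      (PhiMap m p).ker ≤ y.1.ker ∧ y.1 g y.2 = y.2} : ℝ) / (n * tupleCount p n)) atTop (𝓝 0) := by
  obtain ⟨w, r, hr, hw, hword⟩ := exists_isReducedWord_of_notMem_ker hp hg
  refine squeeze_zero (fun n ↦ by positivity) (fun n ↦ ?_)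
    (tendsto_card_prefixProd_fixed_div hp hr hw)
  gcongr
  refine Nat.card_le_card_of_injective (fun y ↦ ⟨(fun i ↦ y.1.1 (.of i), y.1.2),
    ker_phiMap_le_ker_iff.mp y.2.1, hword y.1.1 y.2.1 ▸ y.2.2⟩) fun y y' h ↦ ?_
  exact Subtype.ext <| Prod.ext
    (PresentedGroup.ext fun i ↦ congrFun (congrArg (·.1.1) h) i) (congrArg (·.1.2) h)

/-- The number of transitive actions of `TorusKnotGroup m p` on `Fin n`. -/
noncomputable def transitiveHomCount (p : Fin m → ℕ) (n : ℕ) : ℕ :=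
  Nat.card {ρ : TorusKnotGroup m p →* Perm (Fin n) // MulAction.IsPretransitive ρ.range (Fin n)}

/-- The number of transitive actions of `TorusKnotGroup m p` on `Fin n` that do not factor through
`PhiMap m p`. -/
noncomputable def nonfactoringCount (p : Fin m → ℕ) (n : ℕ) : ℕ :=
  Nat.card {ρ : TorusKnotGroup m p →* Perm (Fin n) //
    MulAction.IsPretransitive ρ.range (Fin n) ∧ ¬ (PhiMap m p).ker ≤ ρ.ker}

/-- The number of transitive actions of `TorusKnotGroup m p` on `Fin n` with a marked fixed point
of `g`. -/
noncomputable def fixedPairCount (g : TorusKnotGroup m p) (n : ℕ) : ℕ :=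
  Nat.card {y : (TorusKnotGroup m p →* Perm (Fin n)) × Fin n //
    MulAction.IsPretransitive y.1.range (Fin n) ∧ y.1 g y.2 = y.2}

lemma card_and_add_card_and_not {α : Type*} [Finite α] (P Q : α → Prop) :
    Nat.card {x // P x ∧ Q x} + Nat.card {x // P x ∧ ¬ Q x} = Nat.card {x // P x} := by
  classical
  rw [← Nat.card_congr (subtypeSubtypeEquivSubtypeInter P Q),
    ← Nat.card_congr (subtypeSubtypeEquivSubtypeInter P fun x ↦ ¬ Q x), ← Nat.card_sum,
    Nat.card_congr (sumCompl fun x : {x // P x} ↦ Q x)]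

lemma nonfactoringCount_eq_card_tuples (p : Fin m → ℕ) (n : ℕ) :
    nonfactoringCount p n = Nat.card {σ : Fin m → Perm (Fin n) //
      (∀ i j, σ i ^ p i = σ j ^ p j) ∧ IsTransitiveTuple σ ∧ ¬ ∀ i, σ i ^ p i = 1} := by
  simp only [nonfactoringCount, isPretransitive_range_iff_isTransitiveTuple, ker_phiMap_le_ker_iff]
  exact card_torusHom fun σ ↦ IsTransitiveTuple σ ∧ ¬ ∀ i, σ i ^ p i = 1

lemma transitiveHomCount_add_card_not_transitive (p : Fin m → ℕ) (n : ℕ) :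
    transitiveHomCount p n +
        Nat.card {σ : Fin m → Perm (Fin n) // (∀ i, σ i ^ p i = 1) ∧ ¬ IsTransitiveTuple σ} =
      tupleCount p n + nonfactoringCount p n := by
  have hfactoring : Nat.card {ρ : TorusKnotGroup m p →* Perm (Fin n) //
      MulAction.IsPretransitive ρ.range (Fin n) ∧ (PhiMap m p).ker ≤ ρ.ker} =
      Nat.card {σ : Fin m → Perm (Fin n) // (∀ i, σ i ^ p i = 1) ∧ IsTransitiveTuple σ} := by
    simp only [isPretransitive_range_iff_isTransitiveTuple, ker_phiMap_le_ker_iff]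
    refine (card_torusHom fun σ ↦ IsTransitiveTuple σ ∧ ∀ i, σ i ^ p i = 1).trans
      (Nat.card_congr (subtypeEquivRight fun σ ↦ ?_))
    exact ⟨fun h ↦ ⟨h.2.2, h.2.1⟩, fun h ↦ ⟨fun i j ↦ by rw [h.1, h.1], h.2, h.1⟩⟩
  rw [transitiveHomCount, ← card_and_add_card_and_not _ fun ρ ↦ (PhiMap m p).ker ≤ ρ.ker,
    hfactoring, ← card_tuples_pow_eq_one,
    ← card_and_add_card_and_not (fun σ ↦ ∀ i, σ i ^ p i = 1) IsTransitiveTuple, add_right_comm,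
    nonfactoringCount]

lemma tendsto_nonfactoringCount_div_tupleCount (hp : ∀ i, p i ≠ 0) (hχ : eulerChar p < 0) :
    Tendsto (fun n ↦ (nonfactoringCount p n : ℝ) / tupleCount p n) atTop (𝓝 0) := by
  simpa only [nonfactoringCount_eq_card_tuples] using tendsto_card_transitive_central_div hp hχ

lemma tendsto_transitiveHomCount_div_tupleCount (hp : ∀ i, p i ≠ 0) (hχ : eulerChar p < 0) :
    Tendsto (fun n ↦ (transitiveHomCount p n : ℝ) / tupleCount p n) atTop (𝓝 1) := by
  have hlim := ((tendsto_nonfactoringCount_div_tupleCount hp hχ).const_add 1).sub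
    (tendsto_card_not_transitive_div hp hχ)
  rw [add_zero, sub_zero] at hlim
  refine hlim.congr fun n ↦ ?_
  have hT : (tupleCount p n : ℝ) ≠ 0 := by exact_mod_cast (tupleCount_pos p n).ne'
  rw [← div_self hT, ← add_div, ← sub_div, ← Nat.cast_add,
    ← transitiveHomCount_add_card_not_transitive, Nat.cast_add, add_sub_cancel_right]

lemma tendsto_nonfactoringCount_div_transitiveHomCount (hp : ∀ i, p i ≠ 0)
    (hχ : eulerChar p < 0) :
    Tendsto (fun n ↦ (nonfactoringCount p n : ℝ) / transitiveHomCount p n) atTop (𝓝 0) := by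
  have hlim := (tendsto_nonfactoringCount_div_tupleCount hp hχ).div
    (tendsto_transitiveHomCount_div_tupleCount hp hχ) one_ne_zero
  rw [zero_div] at hlim
  refine hlim.congr fun n ↦ div_div_div_cancel_right₀ ?_ _ _
  exact_mod_cast (tupleCount_pos p n).ne'

lemma card_prod_fin_subtype {α : Type*} (P : α → Prop) (n : ℕ) :
    Nat.card {y : α × Fin n // P y.1} = Nat.card {x // P x} * n := by
  rw [Nat.card_congr (prodSubtypeFstEquivSubtypeProd (β := Fin n) (p := P)), Nat.card_prod,
    Nat.card_fin]

lemma card_subtype_mono {α : Type*} [Finite α] {P Q : α → Prop} (h : ∀ x, P x → Q x) :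
    Nat.card {x // P x} ≤ Nat.card {x // Q x} :=
  Nat.card_mono (Set.toFinite {x | Q x}) h

lemma fixedPairCount_le_transitiveHomCount_mul (g : TorusKnotGroup m p) (n : ℕ) :
    fixedPairCount g n ≤ transitiveHomCount p n * n := by
  rw [transitiveHomCount, ← card_prod_fin_subtype]
  exact card_subtype_mono fun y hy ↦ hy.1

lemma fixedPairCount_le_add (g : TorusKnotGroup m p) (n : ℕ) :
    fixedPairCount g n ≤ Nat.card {y : (TorusKnotGroup m p →* Perm (Fin n)) × Fin n //
      (PhiMap m p).ker ≤ y.1.ker ∧ y.1 g y.2 = y.2} + nonfactoringCount p n * n := by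
  rw [fixedPairCount, ← card_and_add_card_and_not _ fun y ↦ (PhiMap m p).ker ≤ y.1.ker,
    nonfactoringCount, ← card_prod_fin_subtype]
  exact add_le_add (card_subtype_mono fun y hy ↦ ⟨hy.2, hy.1.2⟩)
    (card_subtype_mono fun y hy ↦ ⟨hy.1.1, hy.2⟩)

lemma transitiveHomCount_mul_le_add {g : TorusKnotGroup m p} (hg : g ∈ (PhiMap m p).ker) (n : ℕ) :
    transitiveHomCount p n * n ≤ fixedPairCount g n + nonfactoringCount p n * n := by
  rw [transitiveHomCount, ← card_and_add_card_and_not _ fun ρ ↦ (PhiMap m p).ker ≤ ρ.ker,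
    add_mul, nonfactoringCount]
  refine Nat.add_le_add_right ?_ _
  rw [← card_prod_fin_subtype]
  exact card_subtype_mono fun y hy ↦ ⟨hy.1, congrArg (· y.2) (MonoidHom.mem_ker.mp (hy.2 hg))⟩

lemma subgroupExp_torusKnotGroup_eq (g : TorusKnotGroup m p) {n : ℕ} (hn : n ≠ 0) :
    subgroupExp (TorusKnotGroup m p) n (fun H ↦ fixedCosetCount g H) =
      fixedPairCount g n / transitiveHomCount p n := by
  have : NeZero n := ⟨hn⟩
  have h := subgroupExp_fixedCosetCount_eq (α := Fin n) g
  rwa [Nat.card_fin] at h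

lemma eventually_transitiveHomCount_pos (hp : ∀ i, p i ≠ 0) (hχ : eulerChar p < 0) :
    ∀ᶠ n in atTop, 0 < transitiveHomCount p n := by
  filter_upwards [(tendsto_transitiveHomCount_div_tupleCount hp hχ).eventually_ne one_ne_zero]
    with n hn
  refine Nat.pos_of_ne_zero fun h ↦ hn ?_
  rw [h, Nat.cast_zero, zero_div]

theorem tendsto_subgroupExp_div_of_notMem_ker (hp : ∀ i, p i ≠ 0) (hχ : eulerChar p < 0)
    {g : TorusKnotGroup m p} (hg : g ∉ (PhiMap m p).ker) :
    Tendsto (fun n : ℕ ↦ subgroupExp (TorusKnotGroup m p) n (fun H ↦ fixedCosetCount g H) / n)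
      atTop (𝓝 0) := by
  have := nonempty_of_eulerChar_neg hχ
  have hfactoring := (tendsto_card_factoring_fixed_div hp hg).div
    (tendsto_transitiveHomCount_div_tupleCount hp hχ) one_ne_zero
  have hlim := hfactoring.add (tendsto_nonfactoringCount_div_transitiveHomCount hp hχ)
  rw [zero_div, add_zero] at hlim
  refine squeeze_zero' ?_ ?_ hlim
  · filter_upwards [eventually_ne_atTop 0] with n hn
    rw [subgroupExp_torusKnotGroup_eq g hn]
    positivity
  · filter_upwards [eventually_ne_atTop 0, eventually_transitiveHomCount_pos hp hχ] with n hn hA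
    have hT := tupleCount_pos p n
    have hcount : (fixedPairCount g n : ℝ) ≤ _ := Nat.cast_le.mpr (fixedPairCount_le_add g n)
    rw [Nat.cast_add, Nat.cast_mul] at hcount
    rw [subgroupExp_torusKnotGroup_eq g hn, div_div, Pi.div_apply]
    refine (div_le_div_of_nonneg_right hcount (by positivity)).trans_eq ?_
    field_simp

theorem tendsto_subgroupExp_div_of_mem_ker (hp : ∀ i, p i ≠ 0) (hχ : eulerChar p < 0)
    {g : TorusKnotGroup m p} (hg : g ∈ (PhiMap m p).ker) :
    Tendsto (fun n : ℕ ↦ subgroupExp (TorusKnotGroup m p) n (fun H ↦ fixedCosetCount g H) / n)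
      atTop (𝓝 1) := by
  have hlim := (tendsto_nonfactoringCount_div_transitiveHomCount hp hχ).const_sub 1
  rw [sub_zero] at hlim
  refine tendsto_of_tendsto_of_tendsto_of_le_of_le' hlim tendsto_const_nhds ?_ ?_ <;>
    filter_upwards [eventually_ne_atTop 0, eventually_transitiveHomCount_pos hp hχ] with n hn hA <;>
    rw [subgroupExp_torusKnotGroup_eq g hn, div_div]
  · have hcount : (transitiveHomCount p n : ℝ) * n ≤
        fixedPairCount g n + nonfactoringCount p n * n :=
      mod_cast transitiveHomCount_mul_le_add hg n
    rw [le_div_iff₀ (by positivity), sub_mul, one_mul, ← mul_assoc,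
      div_mul_cancel₀ _ (by positivity)]
    linarith
  · exact div_le_one_of_le₀ (mod_cast fixedPairCount_le_transitiveHomCount_mul g n) (by positivity)

end TorusKnotGroups

theorem irs_limit_torusKnotGroup (m : ℕ) (p : Fin m → ℕ) (hp : ∀ i, 2 ≤ p i)
    (h : ∑ i, (1 : ℝ) / (p i : ℝ) < (m : ℝ) - 1)
    (g : TorusKnotGroup m p) (hg : g ≠ 1) :
    (g ∉ (PhiMap m p).ker →
      (fun n : ℕ => subgroupExp (TorusKnotGroup m p) n
          (fun H => (fixedCosetCount g H : ℝ))) =o[Filter.atTop] (fun n : ℕ => (n : ℝ))) ∧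
    (g ∈ (PhiMap m p).ker →
      Filter.Tendsto (fun n : ℕ => subgroupExp (TorusKnotGroup m p) n
          (fun H => (fixedCosetCount g H : ℝ)) / (n : ℝ)) Filter.atTop (𝓝 1)) := by
  have hp0 (i : Fin m) : p i ≠ 0 := (two_pos.trans_le (hp i)).ne'
  have hχ : eulerChar p < 0 := by
    rw [eulerChar, Fintype.card_fin]
    exact sub_neg.mpr h
  refine ⟨fun hL ↦ ?_, tendsto_subgroupExp_div_of_mem_ker hp0 hχ⟩
  refine (isLittleO_iff_tendsto' ?_).mpr (tendsto_subgroupExp_div_of_notMem_ker hp0 hχ hL)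
  filter_upwards [eventually_ne_atTop 0] with n hn hn0
  exact absurd (Nat.cast_eq_zero.mp hn0) hn
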